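/- Let p be a prime with p ≡ 2 (mod 3), and let k, n be nonnegative integers. Then, as an identity of integers, (p² + 1)·B_3(p^k·n + p^k − 1) = (p^{2k} − (−1)^k)·B_3(p·n + p − 1) + (p^{2k} + (−1)^k·p²)·B_3(n). -/

import Mathlib

/-- The hook length of the cell `(i, j)` in a Young diagram `μ`:
arm length + leg length + 1. -/
def YoungDiagram.hookLength (μ : YoungDiagram) (i j : ℕ) : ℕ :=
  μ.rowLen i + μ.colLen j - i - j - 1

/-- A Young diagram (equivalently, a partition) is a 3-core if none of its
hook numbers is divisible by 3. -/
def YoungDiagram.IsThreeCore (μ : YoungDiagram) : Prop :=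
  ∀ c ∈ μ.cells, ¬ (3 ∣ μ.hookLength c.1 c.2)

/-- `a3 n` is the number of 3-core partitions of `n`. -/
noncomputable def a3 (n : ℕ) : ℕ :=
  Nat.card {μ : YoungDiagram // μ.card = n ∧ μ.IsThreeCore}

/-- `A3 n` is the number of partition pairs of `n` in which each partition is a 3-core. -/
noncomputable def A3 (n : ℕ) : ℕ :=
  Nat.card {p : YoungDiagram × YoungDiagram //
    p.1.card + p.2.card = n ∧ p.1.IsThreeCore ∧ p.2.IsThreeCore}

/-- `B3 n` is the number of partition triples of `n` in which each partition is a 3-core. -/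
noncomputable def B3 (n : ℕ) : ℕ :=
  Nat.card {p : YoungDiagram × YoungDiagram × YoungDiagram //
    p.1.card + p.2.1.card + p.2.2.card = n ∧
    p.1.IsThreeCore ∧ p.2.1.IsThreeCore ∧ p.2.2.IsThreeCore}


open Finset

def ch (a : ZMod 3) : ℤ := if a = 1 then 1 else if a = 2 then -1 else 0

lemma ch_mul : ∀ a b : ZMod 3, ch (a * b) = ch a * ch b := by decide

/-- two-variable divisor sum -/
def DS (g : ℕ → ℕ → ℤ) (n : ℕ) : ℤ := ∑ v ∈ n.divisorsAntidiagonal, g v.1 v.2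

lemma DS_rec (g : ℕ → ℕ → ℤ) (p : ℕ) (hp : p.Prime) (A B : ℤ)
    (hA : ∀ d x, g (p * d) x = A * g d x) (hB : ∀ d x, g d (p * x) = B * g d x)
    (K : ℕ) (hK : 0 < K) :
    DS g (p * K) = (A + B) * DS g K - if p ∣ K then A * B * DS g (K / p) else 0 := by
  classical
  have hp0 := hp.pos
  have h1 : ∑ v ∈ (p * K).divisorsAntidiagonal with p ∣ v.1, g v.1 v.2 = A * DS g K := by
    rw [DS, mul_sum]
    symm
    refine sum_nbij' (fun v => (p * v.1, v.2)) (fun v => (v.1 / p, v.2)) ?_ ?_ ?_ ?_ ?_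
    · rintro ⟨d, x⟩ h
      simp only [Nat.mem_divisorsAntidiagonal, mem_filter] at h ⊢
      refine ⟨⟨by rw [mul_assoc, h.1], by positivity⟩, dvd_mul_right _ _⟩
    · rintro ⟨d, x⟩ h
      simp only [Nat.mem_divisorsAntidiagonal, mem_filter] at h ⊢
      obtain ⟨⟨h1, h2⟩, e, rfl⟩ := h
      rw [Nat.mul_div_cancel_left _ hp0]
      refine ⟨Nat.eq_of_mul_eq_mul_left hp0 (by rw [← h1]; ring), hK.ne'⟩
    · rintro ⟨d, x⟩ h
      simp [Nat.mul_div_cancel_left _ hp0]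
    · rintro ⟨d, x⟩ h
      simp only [Nat.mem_divisorsAntidiagonal, mem_filter] at h ⊢
      rw [Nat.mul_div_cancel' h.2]
    · rintro ⟨d, x⟩ h
      simp [hA]
  have h2 : ∑ v ∈ (p * K).divisorsAntidiagonal with p ∣ v.2, g v.1 v.2 = B * DS g K := by
    rw [DS, mul_sum]
    symm
    refine sum_nbij' (fun v => (v.1, p * v.2)) (fun v => (v.1, v.2 / p)) ?_ ?_ ?_ ?_ ?_
    · rintro ⟨d, x⟩ h
      simp only [Nat.mem_divisorsAntidiagonal, mem_filter] at h ⊢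
      refine ⟨⟨by rw [mul_left_comm, h.1], by positivity⟩, dvd_mul_right _ _⟩
    · rintro ⟨d, x⟩ h
      simp only [Nat.mem_divisorsAntidiagonal, mem_filter] at h ⊢
      obtain ⟨⟨h1, h2⟩, e, rfl⟩ := h
      rw [Nat.mul_div_cancel_left _ hp0]
      refine ⟨Nat.eq_of_mul_eq_mul_left hp0 (by rw [← h1]; ring), hK.ne'⟩
    · rintro ⟨d, x⟩ h
      simp [Nat.mul_div_cancel_left _ hp0]
    · rintro ⟨d, x⟩ h
      simp only [Nat.mem_divisorsAntidiagonal, mem_filter] at h ⊢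
      rw [Nat.mul_div_cancel' h.2]
    · rintro ⟨d, x⟩ h
      simp [hB]
  have h3 : ∑ v ∈ (p * K).divisorsAntidiagonal with p ∣ v.1 ∧ p ∣ v.2, g v.1 v.2 =
      if p ∣ K then A * B * DS g (K / p) else 0 := by
    split_ifs with hd
    · obtain ⟨L, rfl⟩ := hd
      rw [Nat.mul_div_cancel_left _ hp0, DS, mul_sum]
      symm
      have hL : L ≠ 0 := by rintro rfl; simp at hK
      refine sum_nbij' (fun v => (p * v.1, p * v.2)) (fun v => (v.1 / p, v.2 / p)) ?_ ?_ ?_ ?_ ?_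
      · rintro ⟨d, x⟩ h
        simp only [Nat.mem_divisorsAntidiagonal, mem_filter] at h ⊢
        refine ⟨⟨by rw [← h.1]; ring, by positivity⟩, dvd_mul_right _ _, dvd_mul_right _ _⟩
      · rintro ⟨d, x⟩ h
        simp only [Nat.mem_divisorsAntidiagonal, mem_filter] at h ⊢
        obtain ⟨⟨h1, h2⟩, ⟨e, rfl⟩, ⟨f, rfl⟩⟩ := h
        rw [Nat.mul_div_cancel_left _ hp0, Nat.mul_div_cancel_left _ hp0]
        refine ⟨Nat.eq_of_mul_eq_mul_left hp0 (Nat.eq_of_mul_eq_mul_left hp0 (by rw [← h1]; ring)), hL⟩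
      · rintro ⟨d, x⟩ h
        simp [Nat.mul_div_cancel_left _ hp0]
      · rintro ⟨d, x⟩ h
        simp only [Nat.mem_divisorsAntidiagonal, mem_filter] at h ⊢
        rw [Nat.mul_div_cancel' h.2.1, Nat.mul_div_cancel' h.2.2]
      · rintro ⟨d, x⟩ h
        simp [hA, hB, mul_assoc]
    · apply sum_eq_zero
      rintro ⟨d, x⟩ h
      exfalso
      simp only [Nat.mem_divisorsAntidiagonal, mem_filter] at h
      obtain ⟨⟨h1, h2⟩, ⟨e, rfl⟩, ⟨f, rfl⟩⟩ := h
      exact hd ⟨e * f, Nat.eq_of_mul_eq_mul_left hp0 (by rw [← h1]; ring)⟩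
  rw [← h3, add_mul, ← h1, ← h2, DS, sum_filter, sum_filter, sum_filter, ← sum_add_distrib,
    ← sum_sub_distrib]
  apply sum_congr rfl
  rintro ⟨d, x⟩ h
  simp only [Nat.mem_divisorsAntidiagonal] at h
  have : p ∣ d ∨ p ∣ x := (Nat.Prime.dvd_mul hp).1 (h.1 ▸ dvd_mul_right _ _)
  by_cases ha : p ∣ d <;> by_cases hb : p ∣ x <;> simp_all

def RR (n : ℕ) : ℤ := DS (fun d _ => ch d) n
def SS (n : ℕ) : ℤ := DS (fun d _ => (d : ℤ)) n
def ff (n : ℕ) : ℤ := DS (fun d x => (d : ℤ) ^ 2 * ch x) n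

lemma RR_rec (p : ℕ) (hp : p.Prime) (K : ℕ) (hK : 0 < K) :
    RR (p * K) = (ch p + 1) * RR K - if p ∣ K then ch p * RR (K / p) else 0 := by
  have := DS_rec (fun d _ => ch d) p hp (ch p) 1 (by intro d x; simp [ch_mul]) (by simp) K hK
  simpa [RR] using this

lemma ff_rec (p : ℕ) (hp : p.Prime) (hp3 : p % 3 = 2) (K : ℕ) (hK : 0 < K) :
    ff (p * (p * K)) = ((p : ℤ) ^ 2 - 1) * ff (p * K) + (p : ℤ) ^ 2 * ff K := by
  have hc : ((p : ℕ) : ZMod 3) = 2 := by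
    have : ((p : ℕ) : ZMod 3) = ((2 : ℕ) : ZMod 3) := (ZMod.natCast_eq_natCast_iff' _ _ _).2 (by simpa using hp3)
    simpa using this
  have h2 : ch 2 = -1 := by decide
  have := DS_rec (fun d x => (d : ℤ) ^ 2 * ch x) p hp ((p : ℤ) ^ 2) (-1)
    (by intro d x; push_cast; ring) (by intro d x; push_cast; rw [ch_mul, hc, h2]; ring) (p * K)
    (Nat.mul_pos hp.pos hK)
  rw [if_pos (dvd_mul_right _ _), Nat.mul_div_cancel_left _ hp.pos] at this
  simp only [ff, this]; ring

/-- R(N) = 0 for N ≡ 2 mod 3 -/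
lemma RR_swap (n : ℕ) : RR n = DS (fun _ x => ch x) n := by
  unfold RR DS
  rw [← Nat.map_swap_divisorsAntidiagonal, sum_map]
  simp

lemma RR_two (n : ℕ) (h : (n : ZMod 3) = 2) : RR n = 0 := by
  have h1 : RR n + RR n = 0 := by
    nth_rewrite 2 [RR_swap]
    unfold RR DS
    rw [← sum_add_distrib]
    apply sum_eq_zero
    rintro ⟨d, x⟩ hv
    simp only [Nat.mem_divisorsAntidiagonal] at hv
    have : (d : ZMod 3) * x = 2 := by rw [← h, ← hv.1]; push_cast; rfl
    revert this
    show _ → ch (d : ZMod 3) + ch (x : ZMod 3) = 0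
    generalize (d : ZMod 3) = a
    generalize (x : ZMod 3) = b
    revert a b
    decide
  omega

def QQ (n : ℕ) : Finset (ℕ × ℕ × ℕ × ℕ) :=
  ((Icc 1 n) ×ˢ (Icc 1 n) ×ˢ (Icc 1 n) ×ˢ (Icc 1 n)).filter
    (fun v => v.1 * v.2.2.1 + v.2.1 * v.2.2.2 = n)

lemma mem_QQ {n a b x y : ℕ} : (a, b, x, y) ∈ QQ n ↔
    0 < a ∧ 0 < b ∧ 0 < x ∧ 0 < y ∧ a * x + b * y = n := by
  simp only [QQ, mem_filter, mem_product, mem_Icc]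
  constructor
  · rintro ⟨⟨h1, h2, h3, h4⟩, h5⟩
    exact ⟨by omega, by omega, by omega, by omega, h5⟩
  · rintro ⟨h1, h2, h3, h4, h5⟩
    have e1 := Nat.le_mul_of_pos_right a h3
    have e2 := Nat.le_mul_of_pos_left x h1
    have e3 := Nat.le_mul_of_pos_right b h4
    have e4 := Nat.le_mul_of_pos_left y h2
    refine ⟨⟨⟨?_, ?_⟩, ⟨?_, ?_⟩, ⟨?_, ?_⟩, ⟨?_, ?_⟩⟩, h5⟩ <;> omega

/-- sum over quadruples with an extra predicate -/
def SQ (n : ℕ) (F : ℕ → ℕ → ℕ → ℕ → ℤ) : ℤ := ∑ v ∈ QQ n, F v.1 v.2.1 v.2.2.1 v.2.2.2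

lemma SQ_congr {n : ℕ} {F G : ℕ → ℕ → ℕ → ℕ → ℤ}
    (h : ∀ a b x y, 0 < a → 0 < b → 0 < x → 0 < y → a * x + b * y = n → F a b x y = G a b x y) :
    SQ n F = SQ n G := by
  apply sum_congr rfl
  rintro ⟨a, b, x, y⟩ hv
  rw [mem_QQ] at hv
  exact h a b x y hv.1 hv.2.1 hv.2.2.1 hv.2.2.2.1 hv.2.2.2.2

lemma SQ_add (n : ℕ) (F G : ℕ → ℕ → ℕ → ℕ → ℤ) :
    SQ n (fun a b x y => F a b x y + G a b x y) = SQ n F + SQ n G := sum_add_distrib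

lemma SQ_sub (n : ℕ) (F G : ℕ → ℕ → ℕ → ℕ → ℤ) :
    SQ n (fun a b x y => F a b x y - G a b x y) = SQ n F - SQ n G := sum_sub_distrib _ _

lemma SQ_swap (n : ℕ) (F : ℕ → ℕ → ℕ → ℕ → ℤ) :
    SQ n F = SQ n (fun a b x y => F b a y x) := by
  refine sum_nbij' (fun v => (v.2.1, v.1, v.2.2.2, v.2.2.1))
    (fun v => (v.2.1, v.1, v.2.2.2, v.2.2.1)) ?_ ?_ ?_ ?_ ?_
  · rintro ⟨a, b, x, y⟩ h; simp only [mem_QQ] at *; refine ⟨h.2.1, h.1, h.2.2.2.1, h.2.2.1, ?_⟩; rw [← h.2.2.2.2]; ring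
  · rintro ⟨a, b, x, y⟩ h; simp only [mem_QQ] at *; refine ⟨h.2.1, h.1, h.2.2.2.1, h.2.2.1, ?_⟩; rw [← h.2.2.2.2]; ring
  all_goals rintro ⟨a, b, x, y⟩ h; simp

lemma SQ_tau (n : ℕ) (F : ℕ → ℕ → ℕ → ℕ → ℤ) :
    SQ n F = SQ n (fun a b x y => F x b a y) := by
  refine sum_nbij' (fun v => (v.2.2.1, v.2.1, v.1, v.2.2.2))
    (fun v => (v.2.2.1, v.2.1, v.1, v.2.2.2)) ?_ ?_ ?_ ?_ ?_
  · rintro ⟨a, b, x, y⟩ h; simp only [mem_QQ] at *; refine ⟨h.2.2.1, h.2.1, h.1, h.2.2.2.1, ?_⟩; rw [← h.2.2.2.2]; ring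
  · rintro ⟨a, b, x, y⟩ h; simp only [mem_QQ] at *; refine ⟨h.2.2.1, h.2.1, h.1, h.2.2.2.1, ?_⟩; rw [← h.2.2.2.2]; ring
  all_goals rintro ⟨a, b, x, y⟩ h; simp

lemma SQ_move (n : ℕ) (F : ℕ → ℕ → ℕ → ℕ → ℤ) :
    SQ n (fun a b x y => if x < y then F (a + b) b x (y - x) else 0) =
      SQ n (fun a b x y => if b < a then F a b x y else 0) := by
  unfold SQ
  rw [← sum_filter (fun v : ℕ × ℕ × ℕ × ℕ => v.2.2.1 < v.2.2.2) (fun v => F (v.1 + v.2.1) v.2.1 v.2.2.1 (v.2.2.2 - v.2.2.1)),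
    ← sum_filter (fun v : ℕ × ℕ × ℕ × ℕ => v.2.1 < v.1) (fun v => F v.1 v.2.1 v.2.2.1 v.2.2.2)]
  refine sum_nbij' (fun v => (v.1 + v.2.1, v.2.1, v.2.2.1, v.2.2.2 - v.2.2.1))
    (fun v => (v.1 - v.2.1, v.2.1, v.2.2.1, v.2.2.2 + v.2.2.1)) ?_ ?_ ?_ ?_ ?_
  · rintro ⟨a, b, x, y⟩ h; simp only [mem_filter, mem_QQ] at *
    obtain ⟨⟨h1, h2, h3, h4, h5⟩, h6⟩ := h
    obtain ⟨z, rfl⟩ := Nat.exists_eq_add_of_lt h6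
    refine ⟨⟨by omega, by omega, by omega, by omega, ?_⟩, by omega⟩
    rw [show x + z + 1 - x = z + 1 by omega]
    rw [← h5]; ring
  · rintro ⟨a, b, x, y⟩ h; simp only [mem_filter, mem_QQ] at *
    obtain ⟨⟨h1, h2, h3, h4, h5⟩, h6⟩ := h
    obtain ⟨z, rfl⟩ := Nat.exists_eq_add_of_lt h6
    refine ⟨⟨by omega, by omega, by omega, by omega, ?_⟩, by omega⟩
    rw [show b + z + 1 - b = z + 1 by omega]
    rw [← h5]; ring
  · rintro ⟨a, b, x, y⟩ h; simp only [mem_filter, mem_QQ] at *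
    simp; omega
  · rintro ⟨a, b, x, y⟩ h; simp only [mem_filter, mem_QQ] at *
    simp; omega
  · rintro ⟨a, b, x, y⟩ h; simp

lemma SQ_move' (n : ℕ) (F : ℕ → ℕ → ℕ → ℕ → ℤ) :
    SQ n (fun a b x y => if y < x then F a (a + b) (x - y) y else 0) =
      SQ n (fun a b x y => if a < b then F a b x y else 0) := by
  rw [SQ_swap, SQ_swap n (fun a b x y => if a < b then F a b x y else 0)]
  have := SQ_move n (fun a b x y => F b a y x)
  rw [← this]
  apply SQ_congr
  intros
  simp [add_comm]

lemma SQ_conv (n : ℕ) (F : ℕ → ℕ → ℤ) (G : ℕ → ℕ → ℤ) :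
    ∑ ij ∈ antidiagonal n, DS F ij.1 * DS G ij.2 = SQ n (fun a b x y => F a x * G b y) := by
  unfold DS SQ
  simp_rw [sum_mul_sum]
  simp_rw [← sum_product']
  rw [sum_sigma']
  refine sum_nbij' (fun v => (v.2.1.1, v.2.2.1, v.2.1.2, v.2.2.2))
    (fun v => ⟨(v.1 * v.2.2.1, v.2.1 * v.2.2.2), ((v.1, v.2.2.1), (v.2.1, v.2.2.2))⟩) ?_ ?_ ?_ ?_ ?_
  · rintro ⟨⟨i, j⟩, ⟨a, x⟩, ⟨b, y⟩⟩ h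
    simp only [mem_sigma, mem_product, HasAntidiagonal.mem_antidiagonal, Nat.mem_divisorsAntidiagonal] at h
    rw [mem_QQ]
    obtain ⟨h1, ⟨h2, h3⟩, ⟨h4, h5⟩⟩ := h
    subst h2 h4
    have := Nat.pos_of_ne_zero h3
    have := Nat.pos_of_ne_zero h5
    refine ⟨Nat.pos_of_mul_pos_right ‹0 < a * x›, Nat.pos_of_mul_pos_right ‹0 < b * y›, Nat.pos_of_mul_pos_left ‹0 < a * x›, Nat.pos_of_mul_pos_left ‹0 < b * y›, h1⟩
  · rintro ⟨a, b, x, y⟩ h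
    rw [mem_QQ] at h
    simp only [mem_sigma, mem_product, HasAntidiagonal.mem_antidiagonal, Nat.mem_divisorsAntidiagonal]
    obtain ⟨h1, h2, h3, h4, h5⟩ := h
    exact ⟨h5, ⟨trivial, by positivity⟩, ⟨trivial, by positivity⟩⟩
  · rintro ⟨⟨i, j⟩, ⟨a, x⟩, ⟨b, y⟩⟩ h
    simp only [mem_sigma, mem_product, HasAntidiagonal.mem_antidiagonal, Nat.mem_divisorsAntidiagonal] at h
    obtain ⟨h1, ⟨h2, h3⟩, ⟨h4, h5⟩⟩ := h
    subst h2 h4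
    rfl
  · rintro ⟨a, b, x, y⟩ h; rfl
  · rintro ⟨⟨i, j⟩, ⟨a, x⟩, ⟨b, y⟩⟩ h; rfl

lemma SQ_tri_xy (n : ℕ) (F : ℕ → ℕ → ℕ → ℕ → ℤ) :
    SQ n F = SQ n (fun a b x y => if x < y then F a b x y else 0) +
      SQ n (fun a b x y => if y < x then F a b x y else 0) +
      SQ n (fun a b x y => if x = y then F a b x y else 0) := by
  rw [← SQ_add, ← SQ_add]
  apply SQ_congr
  intro a b x y _ _ _ _ _
  rcases lt_trichotomy x y with h | h | h
  · simp [h, h.not_gt, h.ne]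
  · simp [h]
  · simp [h, h.not_gt, h.ne']

lemma SQ_tri_ab (n : ℕ) (F : ℕ → ℕ → ℕ → ℕ → ℤ) :
    SQ n F = SQ n (fun a b x y => if a < b then F a b x y else 0) +
      SQ n (fun a b x y => if b < a then F a b x y else 0) +
      SQ n (fun a b x y => if a = b then F a b x y else 0) := by
  rw [← SQ_add, ← SQ_add]
  apply SQ_congr
  intro a b x y _ _ _ _ _
  rcases lt_trichotomy a b with h | h | h
  · simp [h, h.not_gt, h.ne]
  · simp [h]
  · simp [h, h.not_gt, h.ne']

lemma SQ_zero {n : ℕ} {F : ℕ → ℕ → ℕ → ℕ → ℤ}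
    (h : ∀ a b x y, 0 < a → 0 < b → 0 < x → 0 < y → a * x + b * y = n → F a b x y = 0) :
    SQ n F = 0 := by
  rw [SQ_congr (G := fun _ _ _ _ => 0) h]; simp [SQ]

lemma SQ_diag (n : ℕ) (F : ℕ → ℕ → ℕ → ℤ) :
    SQ n (fun a b x y => if x = y then F a b x else 0) =
      ∑ v ∈ n.divisorsAntidiagonal, ∑ a ∈ Ico 1 v.1, F a (v.1 - a) v.2 := by
  unfold SQ
  rw [← sum_filter (fun v : ℕ × ℕ × ℕ × ℕ => v.2.2.1 = v.2.2.2) (fun v => F v.1 v.2.1 v.2.2.1),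
    sum_sigma']
  refine sum_nbij' (fun v => ⟨(v.1 + v.2.1, v.2.2.1), v.1⟩)
    (fun v => (v.2, v.1.1 - v.2, v.1.2, v.1.2)) ?_ ?_ ?_ ?_ ?_
  · rintro ⟨a, b, x, y⟩ h
    simp only [mem_filter, mem_QQ, mem_sigma, Nat.mem_divisorsAntidiagonal, mem_Ico] at *
    obtain ⟨⟨h1, h2, h3, h4, h5⟩, rfl⟩ := h
    refine ⟨⟨by rw [← h5]; ring, by rw [← h5]; positivity⟩, by omega, by omega⟩
  · rintro ⟨⟨c, x⟩, a⟩ h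
    simp only [mem_filter, mem_QQ, mem_sigma, Nat.mem_divisorsAntidiagonal, mem_Ico] at *
    obtain ⟨⟨h1, h2⟩, h3, h4⟩ := h
    have : 0 < x := by
      rcases Nat.eq_zero_or_pos x with h | h
      · subst h; simp at h1; omega
      · exact h
    refine ⟨⟨by omega, by omega, this, this, ?_⟩, trivial⟩
    rw [← add_mul, Nat.add_sub_cancel' h4.le, h1]
  · rintro ⟨a, b, x, y⟩ h
    simp only [mem_filter, mem_QQ] at *
    simp [h.2]
  · rintro ⟨⟨c, x⟩, a⟩ h
    simp only [mem_sigma, mem_Ico] at *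
    simp [Nat.add_sub_cancel' h.2.2.le]
  · rintro ⟨a, b, x, y⟩ h
    simp

lemma sum_res (g : ZMod 3 → ℤ) (d : ℕ) :
    ∑ a ∈ range (3 * d), g a = d * (g 0 + g 1 + g 2) := by
  induction d with
  | zero => simp
  | succ k ih =>
    rw [show 3 * (k + 1) = 3 * k + 1 + 1 + 1 by ring, sum_range_succ, sum_range_succ,
      sum_range_succ, ih]
    have h3 : (3 : ZMod 3) = 0 := by decide
    push_cast
    rw [h3]
    norm_num
    ring

lemma cast_cases (n : ℕ) : ∃ d, (n = 3 * d ∧ (n : ZMod 3) = 0) ∨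
    (n = 3 * d + 1 ∧ (n : ZMod 3) = 1) ∨ (n = 3 * d + 2 ∧ (n : ZMod 3) = 2) := by
  have h3 : (3 : ZMod 3) = 0 := by decide
  refine ⟨n / 3, ?_⟩
  have : n = 3 * (n / 3) ∨ n = 3 * (n / 3) + 1 ∨ n = 3 * (n / 3) + 2 := by omega
  rcases this with h | h | h
  · left; refine ⟨h, ?_⟩; rw [h]; push_cast; rw [h3]; simp
  · right; left; refine ⟨h, ?_⟩; rw [h]; push_cast; rw [h3]; simp
  · right; right; refine ⟨h, ?_⟩; rw [h]; push_cast; rw [h3]; simp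

abbrev Z3 := ZMod 3

def e0 (a b x y : Z3) : ℤ := if a ≠ 0 ∧ b = a ∧ x = a ∧ y = a then 1 else 0
def e1 (a b x y : Z3) : ℤ := if a ≠ 0 ∧ b = -a ∧ x = a ∧ y = -a then 1 else 0
def g1 (a b x y : Z3) : ℤ := if a ≠ 0 ∧ b = 0 ∧ x = -a ∧ y = a then 1 else 0
def g2 (a b x y : Z3) : ℤ := if a ≠ 0 ∧ b = 0 ∧ x = -a ∧ y = -a then 1 else 0

/-- lift to naturals -/
def LL (φ : Z3 → Z3 → Z3 → Z3 → ℤ) : ℕ → ℕ → ℕ → ℕ → ℤ := fun a b x y => φ a b x y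

lemma S3_aux (n : ℕ) : SQ n (LL e0) - SQ n (LL e1) =
    SQ n (fun a b x y => if a = b then e0 a b x y else 0) := by
  have h1 : SQ n (LL e1) = 2 * SQ n (fun a b x y => if a < b then LL g2 a b x y else 0) := by
    rw [SQ_tri_xy, SQ_zero (F := fun a b x y => if x = y then LL e1 a b x y else 0),
      SQ_swap n (fun a b x y => if x < y then LL e1 a b x y else 0)]
    · have k1 : SQ n (fun a b x y => if y < x then LL e1 b a y x else 0) =
          SQ n (fun a b x y => if y < x then LL e1 a b x y else 0) := by
        apply SQ_congr; intro a b x y _ _ _ _ _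
        have : ∀ a b x y : Z3, e1 b a y x = e1 a b x y := by decide
        simp only [LL, this]
      rw [k1]
      have k2 := SQ_move' n (LL g2)
      rw [← k2]
      have k3 : SQ n (fun a b x y => if y < x then LL e1 a b x y else 0) =
          SQ n (fun a b x y => if y < x then LL g2 a (a + b) (x - y) y else 0) := by
        apply SQ_congr; intro a b x y _ _ _ _ _
        have : ∀ a b x y : Z3, e1 a b x y = g2 a (a + b) (x - y) y := by decide
        by_cases h : y < x
        · simp only [LL, if_pos h, this]; rw [Nat.cast_sub h.le]; push_cast; rfl
        · simp [h]
      rw [k3]; ring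
    · intro a b x y _ _ _ _ _
      by_cases h : x = y
      · subst h
        have : ∀ a b x : Z3, e1 a b x x = 0 := by decide
        simp [LL, this]
      · simp [h]
  have h2 : SQ n (LL e0) = 2 * SQ n (fun a b x y => if y < x then LL g1 a b x y else 0) +
      SQ n (fun a b x y => if a = b then e0 a b x y else 0) := by
    rw [SQ_tri_ab, SQ_swap n (fun a b x y => if b < a then LL e0 a b x y else 0)]
    have k1 : SQ n (fun a b x y => if a < b then LL e0 b a y x else 0) =
          SQ n (fun a b x y => if a < b then LL e0 a b x y else 0) := by
      apply SQ_congr; intro a b x y _ _ _ _ _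
      have : ∀ a b x y : Z3, e0 b a y x = e0 a b x y := by decide
      simp only [LL, this]
    rw [k1, ← SQ_move' n (LL e0)]
    have k3 : SQ n (fun a b x y => if y < x then LL g1 a b x y else 0) =
          SQ n (fun a b x y => if y < x then LL e0 a (a + b) (x - y) y else 0) := by
      apply SQ_congr; intro a b x y _ _ _ _ _
      have : ∀ a b x y : Z3, g1 a b x y = e0 a (a + b) (x - y) y := by decide
      by_cases h : y < x
      · simp only [LL, if_pos h, this]; rw [Nat.cast_sub h.le]; push_cast; rfl
      · simp [h]
    rw [k3]; simp only [LL]; ring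
  have h3 : SQ n (fun a b x y => if x < y then LL g1 a b x y else 0) =
      SQ n (fun a b x y => if b < a then LL g2 a b x y else 0) := by
    rw [← SQ_move n (LL g2)]
    apply SQ_congr; intro a b x y _ _ _ _ _
    have : ∀ a b x y : Z3, g1 a b x y = g2 (a + b) b x (y - x) := by decide
    by_cases h : x < y
    · simp only [LL, if_pos h, this]; rw [Nat.cast_sub h.le]; push_cast; rfl
    · simp [h]
  have h4 : SQ n (LL g1) = SQ n (LL g2) := by
    rw [SQ_tau]
    apply SQ_congr; intro a b x y _ _ _ _ _
    have : ∀ a b x y : Z3, g1 x b a y = g2 a b x y := by decide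
    simp only [LL, this]
  rw [SQ_tri_xy n (LL g1), SQ_tri_ab n (LL g2),
    SQ_zero (F := fun a b x y => if x = y then LL g1 a b x y else 0),
    SQ_zero (F := fun a b x y => if a = b then LL g2 a b x y else 0)] at h4
  · linarith
  · intro a b x y _ _ _ _ _
    by_cases h : a = b
    · subst h
      have : ∀ a x y : Z3, g2 a a x y = 0 := by decide
      simp [LL, this]
    · simp [h]
  · intro a b x y _ _ _ _ _
    by_cases h : x = y
    · subst h
      have : ∀ a b x : Z3, g1 a b x x = 0 := by decide
      simp [LL, this]
    · simp [h]

lemma SQ_flip (n : ℕ) (F : ℕ → ℕ → ℕ → ℕ → ℤ) :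
    SQ n F = SQ n (fun a b x y => F x y a b) := by
  refine sum_nbij' (fun v => (v.2.2.1, v.2.2.2, v.1, v.2.1))
    (fun v => (v.2.2.1, v.2.2.2, v.1, v.2.1)) ?_ ?_ ?_ ?_ ?_
  · rintro ⟨a, b, x, y⟩ h; simp only [mem_QQ] at *
    refine ⟨h.2.2.1, h.2.2.2.1, h.1, h.2.1, ?_⟩; rw [← h.2.2.2.2]; ring
  · rintro ⟨a, b, x, y⟩ h; simp only [mem_QQ] at *
    refine ⟨h.2.2.1, h.2.2.2.1, h.1, h.2.1, ?_⟩; rw [← h.2.2.2.2]; ring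
  all_goals rintro ⟨a, b, x, y⟩ h; simp

lemma sum_Ico_res (g : ZMod 3 → ℤ) (c : ℕ) (hc : 0 < c) :
    ∑ a ∈ Ico 1 c, g a = ∑ a ∈ range c, g a - g 0 := by
  rw [range_eq_Ico, sum_eq_sum_Ico_succ_bot hc]; simp

lemma S3_diag (n : ℕ) (h : (n : ZMod 3) = 2) :
    3 * SQ n (fun a b x y => if a = b then e0 a b x y else 0) = SS n := by
  rw [SQ_flip]
  have hd := SQ_diag n (fun a b x => e0 x x a b)
  have : SQ n (fun a b x y => if x = y then e0 x y a b else 0) =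
      SQ n (fun a b x y => if x = y then e0 x x a b else 0) := by
    apply SQ_congr; intro a b x y _ _ _ _ _
    by_cases h : x = y
    · subst h; rfl
    · simp [h]
  rw [this, hd, mul_sum]
  have hz := RR_two n h
  have : SS n = SS n - RR n := by rw [hz]; ring
  rw [this, SS, RR, DS, DS, ← sum_sub_distrib]
  apply sum_congr rfl
  rintro ⟨c, x⟩ hv
  simp only [Nat.mem_divisorsAntidiagonal] at hv
  have hcx : (c : ZMod 3) * x = 2 := by rw [← h, ← hv.1]; push_cast; rfl
  have hx : (x : ZMod 3) = - c ∧ (c : ZMod 3) ≠ 0 := by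
    revert hcx
    generalize (c : ZMod 3) = u
    generalize (x : ZMod 3) = v
    revert u v; decide
  have hc : 0 < c := by
    rcases Nat.eq_zero_or_pos c with h | h
    · subst h; simp at hx
    · exact h
  have e : ∑ a ∈ Ico 1 c, e0 x x a (c - a : ℕ) =
      ∑ a ∈ Ico 1 c, (fun a : ZMod 3 => e0 (-c) (-c) a (c - a)) a := by
    apply sum_congr rfl
    intro a ha
    rw [mem_Ico] at ha
    rw [hx.1, Nat.cast_sub ha.2.le]
  simp only
  rw [e.trans (sum_Ico_res (fun a : ZMod 3 => e0 (-c) (-c) a (c - a)) c hc)]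
  obtain ⟨d, ⟨h1, h2⟩ | ⟨h1, h2⟩ | ⟨h1, h2⟩⟩ := cast_cases c
  · exact absurd h2 hx.2
  · rw [h2, h1, sum_range_succ, sum_res (fun a => e0 (-1) (-1) a (1 - a))]
    have : ((3 * d : ℕ) : ZMod 3) = 0 := by
      rw [Nat.cast_mul, show ((3 : ℕ) : ZMod 3) = 0 by decide, zero_mul]
    rw [this]
    have v0 : e0 (-1) (-1) 0 (1 - 0) = 0 := by decide
    have v1 : e0 (-1) (-1) 1 (1 - 1) = 0 := by decide
    have v2 : e0 (-1) (-1) 2 (1 - 2) = 1 := by decide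
    have v3 : ch 1 = 1 := by decide
    simp only [v0, v1, v2, v3]; push_cast; ring
  · rw [h2, h1, sum_range_succ, sum_range_succ, sum_res (fun a => e0 (-2) (-2) a (2 - a))]
    have : ((3 * d : ℕ) : ZMod 3) = 0 := by
      rw [Nat.cast_mul, show ((3 : ℕ) : ZMod 3) = 0 by decide, zero_mul]
    have : ((3 * d + 1 : ℕ) : ZMod 3) = 1 := by push_cast at *; rw [this]; simp
    have v0 : e0 (-2) (-2) 0 (2 - 0) = 0 := by decide
    have v1 : e0 (-2) (-2) 1 (2 - 1) = 1 := by decide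
    have v2 : e0 (-2) (-2) 2 (2 - 2) = 0 := by decide
    have v3 : ch 2 = -1 := by decide
    simp only [*]; push_cast; ring

def ind (k : ZMod 3) (n : ℕ) : ℤ := if (n : ZMod 3) = k then 1 else 0

lemma DS_mul_ind (F : ℕ → ℕ → ℤ) (n : ℕ) (k : ZMod 3) :
    DS F n * (if (n : ZMod 3) = k then 1 else 0) =
      DS (fun a x => F a x * (if (a : ZMod 3) * x = k then 1 else 0)) n := by
  unfold DS
  rw [sum_mul]
  apply sum_congr rfl
  rintro ⟨a, x⟩ hv
  simp only [Nat.mem_divisorsAntidiagonal] at hv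
  simp [← hv.1]

lemma S3 (n : ℕ) (h : (n : ZMod 3) = 2) :
    3 * ∑ ij ∈ antidiagonal n, (RR ij.1 * (if (ij.1 : ZMod 3) = 1 then 1 else 0)) *
      (RR ij.2 * (if (ij.2 : ZMod 3) = 1 then 1 else 0)) = SS n := by
  simp_rw [RR, DS_mul_ind]
  rw [SQ_conv, ← S3_diag n h, ← S3_aux n, ← SQ_sub]
  congr 1
  apply SQ_congr; intro a b x y _ _ _ _ _
  have : ∀ a b x y : Z3, ch a * (if a * x = 1 then 1 else 0) * (ch b * (if b * y = 1 then 1 else 0)) = e0 a b x y - e1 a b x y := by decide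
  exact this a b x y

def p1 (a b x y : Z3) : ℤ := if b = -a ∧ x = -a ∧ y = -a then ch a else 0
def p2 (a b x y : Z3) : ℤ := if b = a ∧ x = -a ∧ y = a then ch a else 0
def t1 (a b x y : Z3) : ℤ := if b = -a ∧ x = a ∧ y = a then ch a else 0
def t2 (a b x y : Z3) : ℤ := if b = a ∧ x = a ∧ y = -a then ch a else 0
def ps (a b x y : Z3) : ℤ := if a ≠ 0 ∧ b = 0 ∧ x = 0 then - ch y else 0

lemma S4_aux1 (n : ℕ) : SQ n (fun a b x y => (b : ℤ) * (LL t1 a b x y + LL t2 a b x y)) =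
    SQ n (fun a b x y => ((a : ℤ) - b) * LL p2 a b x y) -
      SQ n (fun a b x y => ((a : ℤ) + b) * LL p1 a b x y) := by
  have k1 : SQ n (fun a b x y => (a : ℤ) * LL p1 a b x y) =
      - SQ n (fun a b x y => (b : ℤ) * LL t1 a b x y) := by
    rw [SQ_swap, eq_neg_iff_add_eq_zero, ← SQ_add]
    apply SQ_zero; intro a b x y _ _ _ _ _
    have : ∀ a b x y : Z3, p1 b a y x = - t1 a b x y := by decide
    simp [LL, this]
  have k2 : SQ n (fun a b x y => (a : ℤ) * LL p2 a b x y) =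
      SQ n (fun a b x y => (b : ℤ) * LL t2 a b x y) := by
    rw [SQ_swap]
    apply SQ_congr; intro a b x y _ _ _ _ _
    have : ∀ a b x y : Z3, p2 b a y x = t2 a b x y := by decide
    simp [LL, this]
  have k3 : SQ n (fun a b x y => (b : ℤ) * LL p1 a b x y) =
      - SQ n (fun a b x y => (b : ℤ) * LL p2 a b x y) := by
    rw [SQ_tau, eq_neg_iff_add_eq_zero, ← SQ_add]
    apply SQ_zero; intro a b x y _ _ _ _ _
    have : ∀ a b x y : Z3, p1 x b a y = - p2 a b x y := by decide
    simp [LL, this]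
  simp only [mul_add, sub_mul, add_mul, SQ_add, SQ_sub]
  rw [k1, k2, k3]; ring

lemma S4_aux2 (n : ℕ) : SQ n (fun a b x y => ((a : ℤ) - b) * LL p2 a b x y) -
      SQ n (fun a b x y => ((a : ℤ) + b) * LL p1 a b x y) =
    - SQ n (fun a b x y => if x = y then ((a : ℤ) + b) * LL p1 a b x y else 0) := by
  have h1 : SQ n (fun a b x y => ((a : ℤ) + b) * LL p1 a b x y) =
      SQ n (fun a b x y => if a < b then (b : ℤ) * LL ps a b x y else 0) +
      SQ n (fun a b x y => if x = y then ((a : ℤ) + b) * LL p1 a b x y else 0) := by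
    rw [SQ_tri_xy, SQ_swap n (fun a b x y => if x < y then ((a : ℤ) + b) * LL p1 a b x y else 0),
      ← SQ_add, ← SQ_move' n (fun a b x y => (b : ℤ) * LL ps a b x y)]
    congr 1
    apply SQ_congr; intro a b x y _ _ _ _ _
    have : ∀ a b x y : Z3, ps a (a + b) (x - y) y = p1 b a y x + p1 a b x y := by decide
    by_cases h : y < x
    · simp only [if_pos h, LL]; rw [Nat.cast_sub h.le]; push_cast; rw [this]; ring
    · simp [h]
  have h2 : SQ n (fun a b x y => ((a : ℤ) - b) * LL p2 a b x y) =
      SQ n (fun a b x y => if y < x then (b : ℤ) * LL ps a b x y else 0) := by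
    rw [SQ_tri_ab, SQ_zero (F := fun a b x y => if a = b then ((a : ℤ) - b) * LL p2 a b x y else 0),
      SQ_swap n (fun a b x y => if b < a then ((a : ℤ) - b) * LL p2 a b x y else 0),
      ← SQ_add]
    · have := SQ_move' n (fun a b x y => ((a : ℤ) - b) * LL p2 a b x y + ((b : ℤ) - a) * LL p2 b a y x)
      rw [add_zero]
      trans SQ n (fun a b x y => if a < b then ((a : ℤ) - b) * LL p2 a b x y + ((b : ℤ) - a) * LL p2 b a y x else 0)
      · apply SQ_congr; intro a b x y _ _ _ _ _
        by_cases h : a < b <;> simp [h]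
      rw [← this]
      apply SQ_congr; intro a b x y _ _ _ _ _
      have : ∀ a b x y : Z3, ps a b x y = p2 (a + b) a y (x - y) - p2 a (a + b) (x - y) y := by
        decide
      by_cases h : y < x
      · simp only [if_pos h, LL]; rw [Nat.cast_sub h.le]; push_cast; rw [this]; ring
      · simp [h]
    · intro a b x y _ _ _ _ _
      by_cases h : a = b <;> simp [h]
  have h3 : SQ n (fun a b x y => if x < y then (b : ℤ) * LL ps a b x y else 0) =
      SQ n (fun a b x y => if b < a then (b : ℤ) * LL ps a b x y else 0) := by
    rw [← SQ_move n (fun a b x y => (b : ℤ) * LL ps a b x y)]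
    apply SQ_congr; intro a b x y _ _ _ _ _
    have : ∀ a b x y : Z3, ps (a + b) b x (y - x) = ps a b x y := by decide
    by_cases h : x < y
    · simp only [if_pos h, LL]; rw [Nat.cast_sub h.le]; push_cast; rw [this]
    · simp [h]
  have h4 := SQ_tri_xy n (fun a b x y => (b : ℤ) * LL ps a b x y)
  rw [SQ_tri_ab, SQ_zero (F := fun a b x y => if x = y then (b : ℤ) * LL ps a b x y else 0),
    SQ_zero (F := fun a b x y => if a = b then (b : ℤ) * LL ps a b x y else 0)] at h4
  · linarith
  · intro a b x y _ _ _ _ _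
    by_cases h : a = b
    · subst h
      have : ∀ a x y : Z3, ps a a x y = 0 := by decide
      simp [LL, this]
    · simp [h]
  · intro a b x y _ _ _ _ _
    by_cases h : x = y
    · subst h
      have : ∀ a b x : Z3, ps a b x x = 0 := by decide
      simp [LL, this]
    · simp [h]

lemma S4_diag (M : ℕ) (hM : 0 < M) :
    SQ (3 * M) (fun a b x y => if x = y then ((a : ℤ) + b) * LL p1 a b x y else 0) =
      - (3 * ff M) := by
  have hd := SQ_diag (3 * M) (fun a b x => ((a : ℤ) + b) * LL p1 a b x x)
  have : SQ (3 * M) (fun a b x y => if x = y then ((a : ℤ) + b) * LL p1 a b x y else 0) =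
      SQ (3 * M) (fun a b x y => if x = y then ((a : ℤ) + b) * LL p1 a b x x else 0) := by
    apply SQ_congr; intro a b x y _ _ _ _ _
    by_cases h : x = y
    · subst h; rfl
    · simp [h]
  rw [this, hd]
  have key : ∀ v ∈ (3 * M).divisorsAntidiagonal,
      ∑ a ∈ Ico 1 v.1, ((a : ℤ) + (v.1 - a : ℕ)) * LL p1 a (v.1 - a) v.2 v.2 =
      if 3 ∣ v.1 then - (3 * (((v.1 / 3 : ℕ) : ℤ) ^ 2 * ch v.2)) else 0 := by
    rintro ⟨c, x⟩ hv
    simp only [Nat.mem_divisorsAntidiagonal] at hv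
    have hc : 0 < c := by
      rcases Nat.eq_zero_or_pos c with h | h
      · subst h; simp at hv
      · exact h
    have e : ∑ a ∈ Ico 1 c, ((a : ℤ) + (c - a : ℕ)) * LL p1 a (c - a) x x =
        c * ∑ a ∈ Ico 1 c, (fun a : Z3 => p1 a (c - a) x x) a := by
      rw [mul_sum]
      apply sum_congr rfl
      intro a ha
      rw [mem_Ico] at ha
      simp only [LL]
      rw [Nat.cast_sub ha.2.le, Nat.cast_sub ha.2.le]; ring
    simp only
    rw [e, sum_Ico_res (fun a : Z3 => p1 a (c - a) x x) c hc]
    obtain ⟨d, ⟨h1, h2⟩ | ⟨h1, h2⟩ | ⟨h1, h2⟩⟩ := cast_cases c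
    · rw [h2, h1, sum_res (fun a : Z3 => p1 a (0 - a) x x), if_pos (dvd_mul_right _ _),
        Nat.mul_div_cancel_left _ (by norm_num)]
      have v0 : ∀ x : Z3, p1 0 (0 - 0) x x = 0 := by decide
      have v1 : ∀ x : Z3, p1 0 (0 - 0) x x + p1 1 (0 - 1) x x + p1 2 (0 - 2) x x = - ch x := by
        decide
      rw [v1, v0]; push_cast; ring
    · rw [if_neg (by omega), h2]
      have v : ∀ x a : Z3, p1 a (1 - a) x x = 0 := by decide
      simp only [v]; simp
    · rw [if_neg (by omega), h2]
      have v : ∀ x a : Z3, p1 a (2 - a) x x = 0 := by decide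
      simp only [v]; simp
  rw [sum_congr rfl key, ← sum_filter (fun v : ℕ × ℕ => 3 ∣ v.1)
    (fun v => - (3 * (((v.1 / 3 : ℕ) : ℤ) ^ 2 * ch v.2))), ff, DS, mul_sum, ← sum_neg_distrib]
  refine sum_nbij' (fun v => (v.1 / 3, v.2)) (fun v => (3 * v.1, v.2)) ?_ ?_ ?_ ?_ ?_
  · rintro ⟨d, x⟩ h
    simp only [Nat.mem_divisorsAntidiagonal, mem_filter] at h ⊢
    obtain ⟨⟨h1, h2⟩, e, rfl⟩ := h
    rw [Nat.mul_div_cancel_left _ (by norm_num)]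
    refine ⟨Nat.eq_of_mul_eq_mul_left (by norm_num : 0 < 3) (by rw [← h1]; ring), hM.ne'⟩
  · rintro ⟨d, x⟩ h
    simp only [Nat.mem_divisorsAntidiagonal, mem_filter] at h ⊢
    refine ⟨⟨by rw [mul_assoc, h.1], by positivity⟩, dvd_mul_right _ _⟩
  · rintro ⟨d, x⟩ h
    simp only [Nat.mem_divisorsAntidiagonal, mem_filter] at h ⊢
    rw [Nat.mul_div_cancel' h.2]
  · rintro ⟨d, x⟩ h
    simp
  · rintro ⟨d, x⟩ h
    simp

lemma S4 (M : ℕ) (hM : 0 < M) :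
    ∑ ij ∈ antidiagonal (3 * M), (RR ij.1 * (if (ij.1 : ZMod 3) = 1 then 1 else 0)) *
      (SS ij.2 * (if (ij.2 : ZMod 3) = 2 then 1 else 0)) = 3 * ff M := by
  simp_rw [RR, SS, DS_mul_ind]
  rw [SQ_conv]
  have := (S4_aux1 (3 * M)).trans (S4_aux2 (3 * M))
  rw [S4_diag M hM, neg_neg] at this
  rw [← this]
  apply SQ_congr; intro a b x y _ _ _ _ _
  have : ∀ a b x y : Z3, ch a * (if a * x = 1 then 1 else 0) * (if b * y = 2 then 1 else 0)
    = t1 a b x y + t2 a b x y := by decide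
  simp only [LL]
  rw [← this]; ring

/-- the triple convolution -/
lemma triple (M : ℕ) (hM : 0 < M) :
    ∑ ij ∈ antidiagonal (3 * M), (RR ij.1 * (if (ij.1 : ZMod 3) = 1 then 1 else 0)) *
      ∑ kl ∈ antidiagonal ij.2, (RR kl.1 * (if (kl.1 : ZMod 3) = 1 then 1 else 0)) *
      (RR kl.2 * (if (kl.2 : ZMod 3) = 1 then 1 else 0)) = ff M := by
  have h := S4 M hM
  have : ∑ ij ∈ antidiagonal (3 * M), (RR ij.1 * (if (ij.1 : ZMod 3) = 1 then 1 else 0)) *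
      (SS ij.2 * (if (ij.2 : ZMod 3) = 2 then 1 else 0)) =
      3 * ∑ ij ∈ antidiagonal (3 * M), (RR ij.1 * (if (ij.1 : ZMod 3) = 1 then 1 else 0)) *
      ∑ kl ∈ antidiagonal ij.2, (RR kl.1 * (if (kl.1 : ZMod 3) = 1 then 1 else 0)) *
      (RR kl.2 * (if (kl.2 : ZMod 3) = 1 then 1 else 0)) := by
    rw [mul_sum]
    apply sum_congr rfl
    rintro ⟨i, j⟩ hij
    rw [HasAntidiagonal.mem_antidiagonal] at hij
    simp only at hij ⊢
    by_cases hi : (i : ZMod 3) = 1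
    · have hj : (j : ZMod 3) = 2 := by
        have : ((i + j : ℕ) : ZMod 3) = 0 := by
          rw [hij, Nat.cast_mul, show ((3 : ℕ) : ZMod 3) = 0 by decide, zero_mul]
        push_cast at this
        rw [hi] at this
        revert this
        generalize (j : ZMod 3) = u
        revert u; decide
      rw [if_pos hi, if_pos hj, ← S3 j hj]; ring
    · simp [hi]
  linarith

def NN (z : ℤ × ℤ) : ℤ := z.1 ^ 2 + z.1 * z.2 + z.2 ^ 2

def mulE (w z : ℤ × ℤ) : ℤ × ℤ :=
  (w.1 * z.1 - w.2 * z.2, w.1 * z.2 + w.2 * z.1 + w.2 * z.2)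

def conE (w : ℤ × ℤ) : ℤ × ℤ := (w.1 + w.2, - w.2)

lemma NN_mulE (w z : ℤ × ℤ) : NN (mulE w z) = NN w * NN z := by
  simp only [NN, mulE]; ring

lemma NN_conE (w : ℤ × ℤ) : NN (conE w) = NN w := by
  simp only [NN, conE]; ring

lemma conE_mulE (w z : ℤ × ℤ) : mulE (conE w) (mulE w z) = (NN w * z.1, NN w * z.2) := by
  simp only [NN, conE, mulE, Prod.mk.injEq]; constructor <;> ring

lemma mulE_conE (w z : ℤ × ℤ) : mulE w (mulE (conE w) z) = (NN w * z.1, NN w * z.2) := by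
  simp only [NN, conE, mulE, Prod.mk.injEq]; constructor <;> ring

lemma mulE_inj (w : ℤ × ℤ) (hw : NN w ≠ 0) : Function.Injective (mulE w) := by
  intro z z' h
  have := congrArg (mulE (conE w)) h
  rw [conE_mulE, conE_mulE, Prod.mk.injEq] at this
  exact Prod.ext (mul_left_cancel₀ hw this.1) (mul_left_cancel₀ hw this.2)

def SE (N : ℕ) : Set (ℤ × ℤ) := {z | NN z = N}

lemma SE_bound {N : ℕ} {z : ℤ × ℤ} (h : NN z = N) : |z.1| ≤ 2 * N ∧ |z.2| ≤ 2 * N := by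
  obtain ⟨x, y⟩ := z
  simp only [NN] at *
  constructor
  · have h1 : x ^ 2 ≤ 2 * N := by nlinarith [sq_nonneg (x + 2 * y), sq_nonneg x]
    have h2 : |x| ≤ |x| ^ 2 := by
      rcases (abs_nonneg x).eq_or_lt with h | h
      · rw [← h]; norm_num
      · nlinarith
    rw [sq_abs] at h2; linarith
  · have h1 : y ^ 2 ≤ 2 * N := by nlinarith [sq_nonneg (y + 2 * x), sq_nonneg y]
    have h2 : |y| ≤ |y| ^ 2 := by
      rcases (abs_nonneg y).eq_or_lt with h | h
      · rw [← h]; norm_num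
      · nlinarith
    rw [sq_abs] at h2; linarith

lemma SE_finite (N : ℕ) : (SE N).Finite := by
  apply Set.Finite.subset (((Set.finite_Icc (-(2 * N : ℤ)) (2 * N))).prod
    (Set.finite_Icc (-(2 * N : ℤ)) (2 * N)))
  rintro ⟨x, y⟩ h
  have := SE_bound h
  rw [abs_le, abs_le] at this
  exact ⟨this.1, this.2⟩

lemma NN_pos {z : ℤ × ℤ} (h : NN z = 0) : z = 0 := by
  have := SE_bound (N := 0) (z := z) (by simpa using h)
  simp at this
  exact Prod.ext this.1 this.2

/-- the number of vectors of norm pN divisible by w, where NN w = p -/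
lemma ncard_image (w : ℤ × ℤ) (hw : NN w ≠ 0) (N : ℕ) :
    (mulE w '' SE N).ncard = (SE N).ncard :=
  Set.ncard_image_of_injective _ (mulE_inj w hw)

lemma image_SE (p : ℕ) (hp : 0 < p) (w : ℤ × ℤ) (hw : NN w = p) (N : ℕ) (z : ℤ × ℤ)
    (hz : NN z = p * N) (hd : (p : ℤ) ∣ (mulE (conE w) z).1 ∧ (p : ℤ) ∣ (mulE (conE w) z).2) :
    z ∈ mulE w '' SE N := by
  obtain ⟨⟨s, hs⟩, ⟨t, ht⟩⟩ := hd
  have hp' : (p : ℤ) ≠ 0 := by exact_mod_cast hp.ne'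
  have e : mulE (conE w) z = (p * s, p * t) := Prod.ext hs ht
  have e2 := mulE_conE w z
  rw [e, hw] at e2
  refine ⟨(s, t), ?_, ?_⟩
  · show NN (s, t) = N
    have := NN_mulE (conE w) z
    rw [e, NN_conE, hw, hz] at this
    simp only [NN] at this ⊢
    have h2 : (p : ℤ) * p * (s ^ 2 + s * t + t ^ 2) = p * p * N := by linear_combination this
    exact mul_left_cancel₀ (mul_ne_zero hp' hp') h2
  · simp only [mulE, Prod.mk.injEq] at e2 ⊢
    refine Prod.ext (mul_left_cancel₀ hp' ?_) (mul_left_cancel₀ hp' ?_)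
    · simp only; linear_combination e2.1
    · simp only; linear_combination e2.2

lemma image_sub (p : ℕ) (w : ℤ × ℤ) (hw : NN w = p) (N : ℕ) : mulE w '' SE N ⊆ SE (p * N) := by
  rintro _ ⟨z, hz, rfl⟩
  have hz : NN z = N := hz
  show NN _ = _
  rw [NN_mulE, hw, hz]; push_cast; rfl

/-- multiples of p -/
lemma mult_p (p : ℕ) (hp : 0 < p) (N : ℕ) :
    ({z ∈ SE (p * N) | (p : ℤ) ∣ z.1 ∧ (p : ℤ) ∣ z.2}).ncard =
      if p ∣ N then (SE (N / p)).ncard else 0 := by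
  have hp' : (p : ℤ) ≠ 0 := by exact_mod_cast hp.ne'
  split_ifs with h
  · obtain ⟨L, rfl⟩ := h
    rw [Nat.mul_div_cancel_left _ hp]
    have hi := ncard_image (p, 0) (by simp [NN]; omega) L
    rw [← hi]
    congr 1
    ext ⟨x, y⟩
    constructor
    · rintro ⟨h1, ⟨s, hs⟩, ⟨t, ht⟩⟩
      simp only at hs ht
      subst hs ht
      refine ⟨(s, t), ?_, by simp [mulE]⟩
      have h1 : NN _ = _ := h1
      show NN _ = _
      simp only [NN] at *
      push_cast at h1
      exact mul_left_cancel₀ (mul_ne_zero hp' hp') (by linear_combination h1)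
    · rintro ⟨⟨s, t⟩, hst, h⟩
      simp only [mulE, Prod.mk.injEq] at h
      obtain ⟨h1, h2⟩ := h
      simp at h1 h2
      subst h1 h2
      refine ⟨?_, dvd_mul_right _ _, dvd_mul_right _ _⟩
      have hst : NN _ = _ := hst
      show NN _ = _
      simp only [NN] at *
      push_cast
      rw [← hst]; ring
  · rw [Set.ncard_eq_zero ((SE_finite _).subset (Set.sep_subset _ _))]
    ext ⟨x, y⟩
    simp only [Set.mem_ofPred_eq, Set.mem_empty_iff_false, iff_false]
    rintro ⟨h1, ⟨s, hs⟩, ⟨t, ht⟩⟩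
    subst hs ht
    have h1 : NN _ = _ := h1
    simp only [NN] at h1
    push_cast at h1
    apply h
    have : (p : ℤ) ∣ N := ⟨s ^ 2 + s * t + t ^ 2, mul_left_cancel₀ hp' (by linear_combination -h1)⟩
    exact_mod_cast this

lemma rec_one (p : ℕ) (hp : p.Prime) (h3 : p ≠ 3) (t : ℤ) (ht : (p : ℤ) ∣ t ^ 2 - t + 1)
    (w : ℤ × ℤ) (hw : NN w = p) (hwt : (p : ℤ) ∣ w.1 + t * w.2) (N : ℕ) :
    (SE (p * N)).ncard + (if p ∣ N then (SE (N / p)).ncard else 0) = 2 * (SE N).ncard := by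
  have hpZ : Prime (p : ℤ) := Nat.prime_iff_prime_int.1 hp
  have hp0 : (p : ℤ) ≠ 0 := hpZ.ne_zero
  have i1 := ncard_image w (by rw [hw]; exact hp0) N
  have i2 := ncard_image (conE w) (by rw [NN_conE, hw]; exact hp0) N
  have hwc : NN (conE w) = p := by rw [NN_conE, hw]
  obtain ⟨k, hk⟩ := ht
  obtain ⟨l, hl⟩ := hwt
  obtain ⟨u, v⟩ := w
  simp only at hl
  have hu : u = p * l - t * v := by linarith
  have A1 : mulE (u, v) '' SE N = {z ∈ SE (p * N) | (p : ℤ) ∣ z.1 + t * z.2} := by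
    ext ⟨x, y⟩
    constructor
    · intro h
      refine ⟨image_sub p _ hw N h, ?_⟩
      obtain ⟨⟨r, s⟩, _, h⟩ := h
      simp only [mulE, Prod.mk.injEq] at h
      obtain ⟨h1, h2⟩ := h
      subst h1 h2 hu
      refine ⟨l * (r + t * s) - k * v * s, ?_⟩
      simp only
      linear_combination (-v * s) * hk
    · rintro ⟨h, m, hm⟩
      simp only at hm
      have hx : x = p * m - t * y := by linarith
      apply image_SE p hp.pos _ hw N
      · have h : NN _ = _ := h
        rw [h]; push_cast; rfl
      · subst hx hu
        simp only [mulE, conE]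
        constructor
        · refine ⟨(p * l - t * v + v) * m - l * t * y + k * v * y, ?_⟩
          linear_combination (v * y) * hk
        · refine ⟨l * y - v * m, ?_⟩
          ring
  have A2 : mulE (conE (u, v)) '' SE N = {z ∈ SE (p * N) | (p : ℤ) ∣ z.1 + (1 - t) * z.2} := by
    ext ⟨x, y⟩
    constructor
    · intro h
      refine ⟨image_sub p _ hwc N h, ?_⟩
      obtain ⟨⟨r, s⟩, _, h⟩ := h
      simp only [mulE, conE, Prod.mk.injEq] at h
      obtain ⟨h1, h2⟩ := h
      subst h1 h2 hu
      refine ⟨l * (r + (1 - t) * s) + k * v * s, ?_⟩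
      simp only
      linear_combination (v * s) * hk
    · rintro ⟨h, m, hm⟩
      simp only at hm
      have hx : x = p * m - (1 - t) * y := by linarith
      apply image_SE p hp.pos _ hwc N
      · have h : NN _ = _ := h
        rw [h]; push_cast; rfl
      · subst hx hu
        simp only [mulE, conE]
        constructor
        · refine ⟨(p * l - t * v) * m - l * (1 - t) * y - k * v * y, ?_⟩
          linear_combination (-v * y) * hk
        · refine ⟨l * y + v * m, ?_⟩
          ring
  have U : SE (p * N) = mulE (u, v) '' SE N ∪ mulE (conE (u, v)) '' SE N := by
    rw [A1, A2]
    ext ⟨x, y⟩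
    constructor
    · intro h
      have h' : NN _ = _ := h
      simp only [NN] at h'
      push_cast at h'
      have : (p : ℤ) ∣ (x + t * y) * (x + (1 - t) * y) :=
        ⟨N - k * y ^ 2, by linear_combination h' - y ^ 2 * hk⟩
      rcases hpZ.dvd_or_dvd this with h1 | h1
      · exact Or.inl ⟨h, h1⟩
      · exact Or.inr ⟨h, h1⟩
    · rintro (h | h)
      · exact h.1
      · exact h.1
  have I : mulE (u, v) '' SE N ∩ mulE (conE (u, v)) '' SE N =
      {z ∈ SE (p * N) | (p : ℤ) ∣ z.1 ∧ (p : ℤ) ∣ z.2} := by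
    rw [A1, A2]
    ext ⟨x, y⟩
    constructor
    · rintro ⟨⟨h, h1⟩, ⟨_, h2⟩⟩
      simp only at h1 h2
      have h4 : (p : ℤ) ∣ (2 * t - 1) * y := by
        have := dvd_sub h1 h2
        rwa [show x + t * y - (x + (1 - t) * y) = (2 * t - 1) * y by ring] at this
      have hy : (p : ℤ) ∣ y := by
        rcases hpZ.dvd_or_dvd h4 with h5 | h5
        · exfalso
          have h6 : (p : ℤ) ∣ 3 := by
            obtain ⟨q, hq⟩ := h5
            refine ⟨4 * k - q * (2 * t - 1), ?_⟩
            linear_combination 4 * hk - (2 * t - 1) * hq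
          have h7 : p ∣ 3 := by exact_mod_cast h6
          exact h3 ((Nat.prime_dvd_prime_iff_eq hp Nat.prime_three).1 h7)
        · exact h5
      refine ⟨h, ?_, hy⟩
      have := dvd_sub h1 (hy.mul_left t)
      simpa using this
    · rintro ⟨h, h1, h2⟩
      exact ⟨⟨h, dvd_add h1 (h2.mul_left _)⟩, ⟨h, dvd_add h1 (h2.mul_left _)⟩⟩
  have := Set.ncard_union_add_ncard_inter (mulE (u, v) '' SE N) (mulE (conE (u, v)) '' SE N)
    ((SE_finite _).image _) ((SE_finite _).image _)
  rw [← U, I, mult_p p hp.pos, i1, i2] at this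
  omega

lemma rec_three (N : ℕ) : (SE (3 * N)).ncard = (SE N).ncard := by
  have h0 : NN (1, 1) = ((3 : ℕ) : ℤ) := by simp [NN]
  rw [← ncard_image (1, 1) (by rw [h0]; norm_num) N]
  congr 1
  apply Set.Subset.antisymm _ (image_sub 3 _ h0 N)
  rintro ⟨x, y⟩ h
  have h : NN (x, y) = ((3 * N : ℕ) : ℤ) := h
  push_cast at h
  have hd : (3 : ℤ) ∣ x - y := by
    have : (3 : ℤ) ∣ (x - y) ^ 2 := ⟨N - x * y, by simp only [NN] at h; linear_combination h⟩
    exact Int.prime_three.dvd_of_dvd_pow this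
  apply image_SE 3 (by norm_num) _ h0 N _ (by push_cast; exact h)
  simp only [mulE, conE]
  constructor <;> omega

lemma rec_two (p : ℕ) (hp : p.Prime) (h3 : p % 3 = 2) (N : ℕ) :
    (SE (p * N)).ncard = if p ∣ N then (SE (N / p)).ncard else 0 := by
  rw [← mult_p p hp.pos]
  congr 1
  apply Set.Subset.antisymm _ (Set.sep_subset _ _)
  rintro ⟨x, y⟩ h
  refine ⟨h, ?_⟩
  have h : NN (x, y) = ((p * N : ℕ) : ℤ) := h
  have := Fact.mk hp
  have e : (x : ZMod p) ^ 2 + x * y + (y : ZMod p) ^ 2 = 0 := by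
    have := congrArg (Int.cast : ℤ → ZMod p) h
    simpa [NN] using this
  simp only [← ZMod.intCast_zmod_eq_zero_iff_dvd] at *
  have hy : (y : ZMod p) = 0 := by
    by_contra hy
    obtain ⟨c, hc⟩ : ∃ c : ZMod p, c * y = x := ⟨x / y, by field_simp⟩
    rw [← hc] at e
    have e2 : c ^ 2 + c + 1 = 0 := by
      have : (c ^ 2 + c + 1) * (y : ZMod p) ^ 2 = 0 := by linear_combination e
      rcases mul_eq_zero.1 this with h | h
      · exact h
      · exact absurd (pow_eq_zero_iff (two_ne_zero) |>.1 h) hy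
    have e3 : c ^ 3 = 1 := by linear_combination (c - 1) * e2
    have c0 : c ≠ 0 := by rintro rfl; simp at e2
    have e4 := ZMod.pow_card_sub_one_eq_one c0
    obtain ⟨q, hq⟩ : ∃ q, p - 1 = 3 * q + 1 := ⟨p / 3, by omega⟩
    rw [hq, pow_succ, pow_mul, e3, one_pow, one_mul] at e4
    rw [e4] at e2
    have : ((3 : ℕ) : ZMod p) = 0 := by push_cast; linear_combination e2
    rw [ZMod.natCast_eq_zero_iff] at this
    have := (Nat.prime_dvd_prime_iff_eq hp Nat.prime_three).1 this
    omega
  rw [hy] at e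
  refine ⟨?_, hy⟩
  simpa using e

lemma exists_t (p : ℕ) (hp : p.Prime) (h3 : p % 3 = 1) : ∃ t : ℤ, (p : ℤ) ∣ t ^ 2 - t + 1 := by
  have := Fact.mk hp
  have : Fact (Nat.Prime 3) := ⟨Nat.prime_three⟩
  obtain ⟨c, hc⟩ := exists_prime_orderOf_dvd_card (G := (ZMod p)ˣ) 3 (by
    rw [ZMod.card_units]; omega)
  have h1 : (c : ZMod p) ^ 3 = 1 := by
    have := pow_orderOf_eq_one c
    rw [hc] at this
    have := congrArg Units.val this
    rwa [Units.val_pow_eq_pow_val, Units.val_one] at this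
  have h2 : (c : ZMod p) - 1 ≠ 0 := by
    intro h
    have : c = 1 := by
      ext; simpa using sub_eq_zero.1 h
    rw [this, orderOf_one] at hc
    omega
  have h4 : (c : ZMod p) ^ 2 + c + 1 = 0 := by
    have : ((c : ZMod p) - 1) * ((c : ZMod p) ^ 2 + c + 1) = 0 := by linear_combination h1
    exact (mul_eq_zero.1 this).resolve_left h2
  obtain ⟨t, ht⟩ := ZMod.intCast_surjective (-(c : ZMod p))
  refine ⟨t, ?_⟩
  rw [← ZMod.intCast_zmod_eq_zero_iff_dvd]
  push_cast
  rw [ht]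
  linear_combination h4

lemma even_NN (u v : ℤ) (this : Even (u ^ 2 + u * v + v ^ 2)) : Even u ∧ Even v := by
  simp only [Int.even_add, Int.even_mul, Int.even_pow] at this
  tauto

lemma odd_tt (t q : ℤ) (h : t ^ 2 - t + 1 = 2 * q) : False := by
  have : Even (t ^ 2 - t + 1) := by rw [h]; simp
  simp only [Int.even_add, Int.even_sub, Int.even_pow] at this
  simp at this

lemma exists_w (p : ℕ) (hp : p.Prime) (t : ℤ) (ht : (p : ℤ) ∣ t ^ 2 - t + 1) :
    ∃ w : ℤ × ℤ, NN w = p ∧ (p : ℤ) ∣ w.1 + t * w.2 := by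
  have := Fact.mk hp
  set k := Nat.sqrt p with hk
  have hk1 : p < (k + 1) * (k + 1) := Nat.lt_succ_sqrt p
  have hk2 : k * k < p := by
    apply lt_of_le_of_ne (Nat.sqrt_le p)
    intro h
    exact (Nat.prime_mul_iff.1 (h ▸ hp)).elim (fun h => by
      rw [h.2] at h; exact Nat.not_prime_one h.1) (fun h => by
      rw [h.2] at h; exact Nat.not_prime_one h.1)
  obtain ⟨⟨a, b⟩, hab, ⟨c, d⟩, hcd, hne, heq⟩ := Finset.exists_ne_map_eq_of_card_lt_of_maps_to
    (s := range (k + 1) ×ˢ range (k + 1)) (t := (univ : Finset (ZMod p)))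
    (f := fun z => (z.1 : ZMod p) + t * z.2) (by simpa [ZMod.card] using hk1) (by simp)
  simp only [mem_product, Finset.mem_range] at hab hcd
  have hd : (p : ℤ) ∣ ((a : ℤ) - c) + t * ((b : ℤ) - d) := by
    rw [← ZMod.intCast_zmod_eq_zero_iff_dvd]
    push_cast
    simp only at heq
    linear_combination heq
  set u : ℤ := (a : ℤ) - c with hu
  set v : ℤ := (b : ℤ) - d with hv
  refine ⟨(u, v), ?_, hd⟩
  have hdN : (p : ℤ) ∣ NN (u, v) := by
    obtain ⟨q, hq⟩ := ht
    obtain ⟨l, hl⟩ := hd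
    refine ⟨l * (u + (1 - t) * v) + q * v ^ 2, ?_⟩
    simp only [NN]
    linear_combination (u + (1 - t) * v) * hl + v ^ 2 * hq
  have hpos : NN (u, v) ≠ 0 := by
    intro h
    have := NN_pos h
    simp only [Prod.mk_eq_zero] at this
    apply hne
    rw [Prod.mk.injEq]; omega
  have b1 : |u| ≤ k := by rw [abs_le]; omega
  have b2 : |v| ≤ k := by rw [abs_le]; omega
  have c1 : u ^ 2 ≤ (k : ℤ) ^ 2 := sq_le_sq' (abs_le.1 b1).1 (abs_le.1 b1).2
  have c2 : v ^ 2 ≤ (k : ℤ) ^ 2 := sq_le_sq' (abs_le.1 b2).1 (abs_le.1 b2).2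
  have hk3 : (k : ℤ) ^ 2 < p := by rw [pow_two]; exact_mod_cast hk2
  have hlt : NN (u, v) < 3 * p := by
    simp only [NN]; nlinarith [sq_nonneg (u - v)]
  have hnn : 0 ≤ NN (u, v) := by
    simp only [NN]; nlinarith [sq_nonneg (u + v), sq_nonneg u, sq_nonneg v]
  obtain ⟨m, hm⟩ := hdN
  have hp0 : (0 : ℤ) < p := by exact_mod_cast hp.pos
  have m1 : m < 3 := by nlinarith
  have m0 : 0 < m := by
    rcases lt_trichotomy m 0 with h | h | h
    · nlinarith
    · rw [h, mul_zero] at hm; exact absurd hm hpos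
    · exact h
  have : m = 1 ∨ m = 2 := by omega
  rcases this with rfl | rfl
  · rw [hm, mul_one]
  · exfalso
    -- parity
    simp only [NN] at hm
    have hev : Even u ∧ Even v := even_NN u v (by rw [hm]; simp)
    obtain ⟨⟨r, hr⟩, ⟨s, hs⟩⟩ := hev
    rw [hr, hs] at hm
    have h2 : (p : ℤ) = 2 * (r ^ 2 + r * s + s ^ 2) := by linarith
    have h3 : 2 ∣ p := by
      have : (2 : ℤ) ∣ p := ⟨_, h2⟩
      exact_mod_cast this
    have h4 := (Nat.prime_dvd_prime_iff_eq Nat.prime_two hp).1 h3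
    obtain ⟨q, hq⟩ := ht
    rw [← h4] at hq
    exact odd_tt t q (by exact_mod_cast hq)

lemma RR_one : RR 1 = 1 := by
  simp [RR, DS, ch]

lemma SE_one : (SE 1).ncard = 6 := by
  have : SE 1 = (({(1,0), (0,1), (-1,1), (-1,0), (0,-1), (1,-1)} : Finset (ℤ × ℤ)) : Set (ℤ × ℤ)) := by
    ext ⟨x, y⟩
    constructor
    · intro h
      have h : NN (x, y) = ((1 : ℕ) : ℤ) := h
      have := SE_bound h
      simp only [abs_le] at this
      obtain ⟨⟨h1, h2⟩, ⟨h3, h4⟩⟩ := this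
      simp only [NN] at h
      push_cast at *
      have hx : x = -2 ∨ x = -1 ∨ x = 0 ∨ x = 1 ∨ x = 2 := by omega
      have : y = -2 ∨ y = -1 ∨ y = 0 ∨ y = 1 ∨ y = 2 := by omega
      rcases hx with rfl | rfl | rfl | rfl | rfl <;> rcases this with rfl | rfl | rfl | rfl | rfl <;> simp_all
    · intro h
      show NN _ = _
      simp at h
      rcases h with h | h | h | h | h | h <;> (obtain ⟨rfl, rfl⟩ := h; simp [NN])
  rw [this, Set.ncard_coe_finset]
  decide

lemma SE_RR (N : ℕ) (hN : 0 < N) : ((SE N).ncard : ℤ) = 6 * RR N := by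
  induction N using Nat.strong_induction_on with
  | _ N ih =>
  by_cases h1 : N = 1
  · subst h1; rw [SE_one, RR_one]; norm_num
  obtain ⟨p, hp, K, rfl⟩ := Nat.exists_prime_and_dvd h1
  have hK : 0 < K := Nat.pos_of_mul_pos_left hN
  have hKlt : K < p * K := by nlinarith [hp.two_le]
  have ihK := ih K hKlt hK
  have ihp : ((if p ∣ K then (SE (K / p)).ncard else 0 : ℕ) : ℤ) =
      6 * if p ∣ K then RR (K / p) else 0 := by
    split_ifs with h
    · exact ih _ (lt_of_le_of_lt (Nat.div_le_self _ _) hKlt)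
        (Nat.div_pos (Nat.le_of_dvd hK h) hp.pos)
    · simp
  rw [RR_rec p hp K hK]
  have h3 : p % 3 = 0 ∨ p % 3 = 1 ∨ p % 3 = 2 := by omega
  rcases h3 with h3 | h3 | h3
  · have : p = 3 := ((Nat.prime_dvd_prime_iff_eq Nat.prime_three hp).1 (Nat.dvd_of_mod_eq_zero h3)).symm
    subst this
    rw [rec_three, ihK]
    have : ch ((3 : ℕ) : ZMod 3) = 0 := by decide
    rw [this]; simp
  · have : ch (p : ZMod 3) = 1 := by
      rw [show ((p : ℕ) : ZMod 3) = ((p % 3 : ℕ) : ZMod 3) by simp, h3]; decide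
    obtain ⟨t, ht⟩ := exists_t p hp h3
    obtain ⟨w, hw, hwt⟩ := exists_w p hp t ht
    have := rec_one p hp (by omega) t ht w hw hwt K
    have := congrArg (Nat.cast : ℕ → ℤ) this
    rw [Nat.cast_add, Nat.cast_mul] at this
    rw [ihp, ihK] at this
    rw [‹ch _ = 1›]
    simp only [one_mul]
    push_cast at this ⊢
    linarith
  · have : ch (p : ZMod 3) = -1 := by
      rw [show ((p : ℕ) : ZMod 3) = ((p % 3 : ℕ) : ZMod 3) by simp, h3]; decide
    rw [rec_two p hp h3, ihp, this]
    split_ifs <;> ring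

def UV (n : ℕ) : Set (ℕ × ℕ) := {z | z.1 ^ 2 + z.2 ^ 2 + z.2 = n + z.1 * z.2}

lemma ncard_bij {α β : Type*} (A : Set α) (B : Set β) (L : α → β) (L' : β → α)
    (h1 : ∀ z ∈ A, L z ∈ B) (h2 : ∀ z ∈ B, L' z ∈ A)
    (h3 : ∀ z ∈ B, L (L' z) = z) (h4 : ∀ z ∈ A, L' (L z) = z) : B.ncard = A.ncard := by
  have : L '' A = B := by
    ext z
    constructor
    · rintro ⟨a, ha, rfl⟩; exact h1 a ha
    · intro hz; exact ⟨L' z, h2 z hz, h3 z hz⟩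
  rw [← this]
  apply Set.InjOn.ncard_image
  intro a ha b hb h
  rw [← h4 a ha, ← h4 b hb, h]

lemma SE_mod (n : ℕ) (x y : ℤ) (h : (x, y) ∈ SE (3 * n + 1)) :
    (3 : ℤ) ∣ x - y - 1 ∨ (3 : ℤ) ∣ x - y + 1 := by
  have h : NN (x, y) = ((3 * n + 1 : ℕ) : ℤ) := h
  simp only [NN] at h
  push_cast at h
  have : (3 : ℤ) ∣ (x - y - 1) * (x - y + 1) := ⟨n - x * y, by linear_combination h⟩
  exact Int.prime_three.dvd_or_dvd this

lemma SE_L (N : ℕ) (x y x' y' : ℤ) (h : (x, y) ∈ SE N) (e : NN (x', y') = NN (x, y)) :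
    (x', y') ∈ SE N := by
  have h : NN (x, y) = (N : ℤ) := h
  show NN _ = _
  rw [e, h]

lemma SE_UV (n : ℕ) : (SE (3 * n + 1)).ncard = 6 * (UV n).ncard := by
  set Q0 : Set (ℤ × ℤ) := {z | z ∈ SE (3 * n + 1) ∧ (3 : ℤ) ∣ z.1 - z.2 - 1 ∧ 0 < z.1 + 2 * z.2 ∧ 0 < 2 * z.1 + z.2} with hQ0
  set Q1 : Set (ℤ × ℤ) := {z | z ∈ SE (3 * n + 1) ∧ (3 : ℤ) ∣ z.1 - z.2 - 1 ∧ 0 < z.1 - z.2 ∧ z.1 + 2 * z.2 < 0} with hQ1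
  set Q2 : Set (ℤ × ℤ) := {z | z ∈ SE (3 * n + 1) ∧ (3 : ℤ) ∣ z.1 - z.2 - 1 ∧ 2 * z.1 + z.2 < 0 ∧ z.1 - z.2 < 0} with hQ2
  set S1 : Set (ℤ × ℤ) := {z | z ∈ SE (3 * n + 1) ∧ (3 : ℤ) ∣ z.1 - z.2 - 1} with hS1
  set S2 : Set (ℤ × ℤ) := {z | z ∈ SE (3 * n + 1) ∧ (3 : ℤ) ∣ z.1 - z.2 + 1} with hS2
  have f0 : Q0.Finite := (SE_finite (3 * n + 1)).subset (fun z h => h.1)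
  have f1 : Q1.Finite := (SE_finite (3 * n + 1)).subset (fun z h => h.1)
  have f2 : Q2.Finite := (SE_finite (3 * n + 1)).subset (fun z h => h.1)
  have g1 : S1.Finite := (SE_finite (3 * n + 1)).subset (fun z h => h.1)
  have g2 : S2.Finite := (SE_finite (3 * n + 1)).subset (fun z h => h.1)
  have e1 : Q1.ncard = Q0.ncard := by
    apply ncard_bij Q0 Q1 (fun z => (z.2, -z.1 - z.2)) (fun z => (-z.1 - z.2, z.1))
    · rintro ⟨x, y⟩ ⟨h1, h2, h3, h4⟩
      simp only at *
      exact ⟨SE_L _ _ _ _ _ h1 (by simp only [NN]; ring), by simp only; omega⟩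
    · rintro ⟨x, y⟩ ⟨h1, h2, h3, h4⟩
      simp only at *
      exact ⟨SE_L _ _ _ _ _ h1 (by simp only [NN]; ring), by simp only; omega⟩
    · rintro ⟨x, y⟩ _; ext <;> simp only <;> omega
    · rintro ⟨x, y⟩ _; ext <;> simp only <;> omega
  have e2 : Q2.ncard = Q0.ncard := by
    apply ncard_bij Q0 Q2 (fun z => (-z.1 - z.2, z.1)) (fun z => (z.2, -z.1 - z.2))
    · rintro ⟨x, y⟩ ⟨h1, h2, h3, h4⟩
      simp only at *
      exact ⟨SE_L _ _ _ _ _ h1 (by simp only [NN]; ring), by simp only; omega⟩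
    · rintro ⟨x, y⟩ ⟨h1, h2, h3, h4⟩
      simp only at *
      exact ⟨SE_L _ _ _ _ _ h1 (by simp only [NN]; ring), by simp only; omega⟩
    · rintro ⟨x, y⟩ _; ext <;> simp only <;> omega
    · rintro ⟨x, y⟩ _; ext <;> simp only <;> omega
  have e3 : S2.ncard = S1.ncard := by
    apply ncard_bij S1 S2 (fun z => (-z.1, -z.2)) (fun z => (-z.1, -z.2))
    · rintro ⟨x, y⟩ ⟨h1, h2⟩
      simp only at *
      exact ⟨SE_L _ _ _ _ _ h1 (by simp only [NN]; ring), by simp only; omega⟩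
    · rintro ⟨x, y⟩ ⟨h1, h2⟩
      simp only at *
      exact ⟨SE_L _ _ _ _ _ h1 (by simp only [NN]; ring), by simp only; omega⟩
    · rintro ⟨x, y⟩ _; ext <;> simp only <;> omega
    · rintro ⟨x, y⟩ _; ext <;> simp only <;> omega
  have e0 : Q0.ncard = (UV n).ncard := by
    apply ncard_bij (UV n) Q0 (fun z => (-(z.1 : ℤ) + 2 * z.2 + 1, 2 * (z.1 : ℤ) - z.2))
      (fun z => (((z.1 + 2 * z.2 - 1) / 3).toNat, ((2 * z.1 + z.2 - 2) / 3).toNat))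
    · rintro ⟨u, v⟩ h
      have h : u ^ 2 + v ^ 2 + v = n + u * v := h
      zify at h
      refine ⟨?_, ?_⟩
      · show NN _ = _
        simp only [NN]; push_cast
        linear_combination 3 * h
      · simp only; omega
    · rintro ⟨x, y⟩ ⟨h1, h2, h3, h4⟩
      simp only at *
      obtain ⟨u, hu⟩ : ∃ u : ℕ, x + 2 * y - 1 = 3 * u := ⟨((x + 2 * y - 1) / 3).toNat, by omega⟩
      obtain ⟨v, hv⟩ : ∃ v : ℕ, 2 * x + y - 2 = 3 * v := ⟨((2 * x + y - 2) / 3).toNat, by omega⟩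
      rw [hu, hv]
      simp only [Int.mul_ediv_cancel_left _ (show (3 : ℤ) ≠ 0 by norm_num), Int.toNat_natCast]
      have h1 : NN (x, y) = ((3 * n + 1 : ℕ) : ℤ) := h1
      have hx : x = -(u : ℤ) + 2 * v + 1 := by omega
      have hy : y = 2 * (u : ℤ) - v := by omega
      subst hx hy
      simp only [NN] at h1
      push_cast at h1
      show u ^ 2 + v ^ 2 + v = n + u * v
      zify
      linarith
    · rintro ⟨x, y⟩ ⟨h1, h2, h3, h4⟩
      simp only at *
      ext <;> simp only <;> omega
    · rintro ⟨x, y⟩ _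
      ext <;> simp only <;> omega
  have u1 : S1 = Q0 ∪ (Q1 ∪ Q2) := by
    ext ⟨x, y⟩
    constructor
    · rintro ⟨h1, h2⟩
      simp only at h2
      by_cases c : 0 < x + 2 * y ∧ 0 < 2 * x + y
      · exact Or.inl ⟨h1, h2, c⟩
      by_cases c' : 0 < x - y ∧ x + 2 * y < 0
      · exact Or.inr (Or.inl ⟨h1, h2, c'⟩)
      · exact Or.inr (Or.inr ⟨h1, h2, by simp only; omega⟩)
    · rintro (h | h | h) <;> exact ⟨h.1, h.2.1⟩
  have u0 : SE (3 * n + 1) = S1 ∪ S2 := by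
    ext ⟨x, y⟩
    constructor
    · intro h
      rcases SE_mod n x y h with h2 | h2
      · exact Or.inl ⟨h, h2⟩
      · exact Or.inr ⟨h, h2⟩
    · rintro (h | h) <;> exact h.1
  have d0 : Disjoint S1 S2 := by
    rw [Set.disjoint_left]
    rintro ⟨x, y⟩ ⟨_, h1⟩ ⟨_, h2⟩
    simp only at *; omega
  have d1 : Disjoint Q1 Q2 := by
    rw [Set.disjoint_left]
    rintro ⟨x, y⟩ ⟨_, h1⟩ ⟨_, h2⟩
    simp only at *; omega
  have d2 : Disjoint Q0 (Q1 ∪ Q2) := by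
    rw [Set.disjoint_left]
    rintro ⟨x, y⟩ ⟨_, h1⟩ (⟨_, h2⟩ | ⟨_, h2⟩) <;>
    simp only at * <;> omega
  rw [u0, Set.ncard_union_eq d0 g1 g2, e3, u1, Set.ncard_union_eq d2 f0 (f1.union f2),
    Set.ncard_union_eq d1 f1 f2, e1, e2, e0]
  ring

lemma UV_RR (n : ℕ) : ((UV n).ncard : ℤ) = RR (3 * n + 1) := by
  have h1 := SE_RR (3 * n + 1) (by omega)
  have h2 := SE_UV n
  zify at h2
  linarith

lemma cell_iff (μ : YoungDiagram) (i j : ℕ) : j < μ.rowLen i ↔ i < μ.colLen j := by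
  rw [← YoungDiagram.mem_iff_lt_rowLen, ← YoungDiagram.mem_iff_lt_colLen]

def bX (μ : YoungDiagram) : Finset ℕ :=
  (range (μ.colLen 0)).image (fun i => μ.rowLen i + (μ.colLen 0 - 1 - i))

lemma mem_bX (μ : YoungDiagram) (x : ℕ) :
    x ∈ bX μ ↔ ∃ i : ℕ, (x : ℤ) = μ.rowLen i - i - 1 + μ.colLen 0 := by
  simp only [bX, mem_image, Finset.mem_range]
  constructor
  · rintro ⟨i, hi, rfl⟩
    exact ⟨i, by omega⟩
  · rintro ⟨i, hi⟩
    have := cell_iff μ i 0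
    exact ⟨i, by omega, by omega⟩

lemma zero_bX (μ : YoungDiagram) : 0 ∉ bX μ := by
  rw [mem_bX]
  rintro ⟨i, hi⟩
  have := cell_iff μ i 0
  omega

/-- beads and gaps are disjoint -/
lemma bead_gap (μ : YoungDiagram) (i j : ℕ) :
    (μ.rowLen i : ℤ) - i - 1 ≠ (j : ℤ) - μ.colLen j := by
  have := cell_iff μ i j
  omega

/-- every integer is a bead or a gap -/
lemma bead_or_gap (μ : YoungDiagram) (t : ℤ) :
    (∃ i : ℕ, t = μ.rowLen i - i - 1) ∨ ∃ j : ℕ, t = (j : ℤ) - μ.colLen j := by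
  have hex : ∃ i : ℕ, (μ.rowLen i : ℤ) - i - 1 ≤ t := by
    refine ⟨μ.colLen 0 + t.natAbs, ?_⟩
    have := cell_iff μ (μ.colLen 0 + t.natAbs) 0
    omega
  classical
  set i := Nat.find hex with hi
  have h1 : (μ.rowLen i : ℤ) - i - 1 ≤ t := Nat.find_spec hex
  by_cases he : t = μ.rowLen i - i - 1
  · exact Or.inl ⟨i, he⟩
  right
  refine ⟨(t + i).toNat, ?_⟩
  have h3 := cell_iff μ i (t + i).toNat
  rcases Nat.eq_zero_or_pos i with h0 | h0
  · omega
  · have h2 : ¬ ((μ.rowLen (i - 1) : ℤ) - (i - 1 : ℕ) - 1 ≤ t) := Nat.find_min hex (by omega)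
    have h4 := cell_iff μ (i - 1) (t + i).toNat
    omega

def Clo (X : Finset ℕ) : Prop := ∀ x ∈ X, 3 ≤ x → x - 3 ∈ X

lemma Clo_iter {X : Finset ℕ} (h : Clo X) (k : ℕ) : ∀ x ∈ X, 3 * k ≤ x → x - 3 * k ∈ X := by
  induction k with
  | zero => intro x hx _; simpa using hx
  | succ k ih =>
    intro x hx hk
    have := h _ (ih x hx (by omega)) (by omega)
    rwa [show x - 3 * (k + 1) = x - 3 * k - 3 by omega]

lemma core_iff (μ : YoungDiagram) : μ.IsThreeCore ↔ Clo (bX μ) := by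
  constructor
  · intro hc x hx h3
    obtain ⟨i, hi⟩ := (mem_bX μ x).1 hx
    rcases bead_or_gap μ ((μ.rowLen i : ℤ) - i - 1 - 3) with ⟨i', h⟩ | ⟨j, h⟩
    · rw [mem_bX]
      exact ⟨i', by omega⟩
    · exfalso
      have hij := cell_iff μ i j
      have hm : (i, j) ∈ μ := by rw [YoungDiagram.mem_iff_lt_rowLen]; omega
      apply hc (i, j) (by simpa using hm)
      simp only [YoungDiagram.hookLength]
      omega
  · rintro hc ⟨i, j⟩ hm hd
    have hm : (i, j) ∈ μ := by simpa using hm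
    have h1 : j < μ.rowLen i := by rwa [YoungDiagram.mem_iff_lt_rowLen] at hm
    have hij := cell_iff μ i j
    have hi0 := cell_iff μ i 0
    have hcol := μ.colLen_anti 0 j (Nat.zero_le _)
    simp only [YoungDiagram.hookLength] at hd
    obtain ⟨k, hk⟩ := hd
    have hx : μ.rowLen i + (μ.colLen 0 - 1 - i) ∈ bX μ := by
      rw [mem_bX]; exact ⟨i, by omega⟩
    have := Clo_iter hc k _ hx (by omega)
    rw [mem_bX] at this
    obtain ⟨i', hi'⟩ := this
    apply bead_gap μ i' j
    omega

lemma bfun_inj (μ : YoungDiagram) : Set.InjOn (fun i => μ.rowLen i + (μ.colLen 0 - 1 - i))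
    (range (μ.colLen 0) : Set ℕ) := by
  intro i hi i' hi' h
  simp only [coe_range, Set.mem_Iio] at hi hi'
  simp only at h
  rcases le_total i i' with hl | hl
  · have := μ.rowLen_anti _ _ hl
    omega
  · have := μ.rowLen_anti _ _ hl
    omega

lemma card_bX (μ : YoungDiagram) : (bX μ).card = μ.colLen 0 := by
  rw [bX, card_image_of_injOn (bfun_inj μ), card_range]

lemma card_rows (μ : YoungDiagram) : μ.card = ∑ i ∈ range (μ.colLen 0), μ.rowLen i := by
  have : μ.cells = ((range (μ.colLen 0)).sigma (fun i => range (μ.rowLen i))).map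
      (Equiv.sigmaEquivProd ℕ ℕ).toEmbedding := by
    ext ⟨i, j⟩
    have h1 := cell_iff μ i 0
    rw [YoungDiagram.mem_cells, YoungDiagram.mem_iff_lt_rowLen]
    simp only [mem_map_equiv, mem_sigma, Finset.mem_range]
    simp only [Equiv.sigmaEquivProd_symm_apply]
    omega
  rw [YoungDiagram.card, this, card_map, card_sigma]
  simp

lemma sum_bX (μ : YoungDiagram) :
    2 * ∑ x ∈ bX μ, x = 2 * μ.card + (bX μ).card * ((bX μ).card - 1) := by
  rw [card_bX, bX, sum_image (bfun_inj μ), sum_add_distrib, card_rows,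
    sum_range_reflect (fun i => i) (μ.colLen 0), mul_add, mul_comm 2 (∑ i ∈ range _, i),
    sum_range_id_mul_two]

lemma bX_inj : Function.Injective bX := by
  intro μ ν h
  have hm : μ.colLen 0 = ν.colLen 0 := by rw [← card_bX, ← card_bX, h]
  -- row lengths agree since gaps agree
  have key : ∀ i, μ.rowLen i = ν.rowLen i := by
    intro i
    induction i using Nat.strong_induction_on with
    | _ i ih =>
    have a1 := cell_iff μ i 0
    have a2 := cell_iff ν i 0
    by_cases hi : i < μ.colLen 0
    · have b1 : μ.rowLen i + (μ.colLen 0 - 1 - i) ∈ bX ν := by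
        rw [← h, mem_bX]; exact ⟨i, by omega⟩
      have b2 : ν.rowLen i + (ν.colLen 0 - 1 - i) ∈ bX μ := by
        rw [h, mem_bX]; exact ⟨i, by omega⟩
      rw [mem_bX] at b1 b2
      obtain ⟨i1, h1⟩ := b1
      obtain ⟨i2, h2⟩ := b2
      have c1 : i ≤ i1 := by
        by_contra hc
        have := ih i1 (by omega)
        have := μ.rowLen_anti i1 i (by omega)
        omega
      have c2 : i ≤ i2 := by
        by_contra hc
        have := ih i2 (by omega)
        have := ν.rowLen_anti i2 i (by omega)
        omega
      have := μ.rowLen_anti i i2 c2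
      have := ν.rowLen_anti i i1 c1
      omega
    · omega
  ext ⟨i, j⟩
  rw [YoungDiagram.mem_cells, YoungDiagram.mem_cells, YoungDiagram.mem_iff_lt_rowLen,
    YoungDiagram.mem_iff_lt_rowLen, key]

def mkY (r : ℕ → ℕ) (hr : Antitone r) (m : ℕ) : YoungDiagram where
  cells := ((range m) ×ˢ (range (r 0))).filter (fun c => c.2 < r c.1)
  isLowerSet := by
    rintro ⟨i, j⟩ ⟨i', j'⟩ ⟨h1, h2⟩ h
    simp only [coe_filter, mem_product, Finset.mem_range, Set.mem_ofPred_eq] at *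
    have := hr h1
    omega

lemma seq_of (X : Finset ℕ) : 0 ∉ X → ∃ r : ℕ → ℕ, Antitone r ∧ (∀ i, 0 < r i ↔ i < X.card) ∧
    X = (range X.card).image (fun i => r i + (X.card - 1 - i)) := by
  induction X using Finset.induction_on_max with
  | empty => exact fun _ => ⟨fun _ => 0, fun _ _ _ => le_refl _, by simp, by simp⟩
  | insert x X hlt ih =>
    intro h0
    have hx : x ∉ X := fun h => lt_irrefl _ (hlt x h)
    have h00 : 0 ∉ X := fun h => h0 (mem_insert_of_mem h)
    have hx0 : x ≠ 0 := fun h => h0 (by rw [h]; exact mem_insert_self _ _)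
    obtain ⟨r, hr, hpos, himg⟩ := ih h00
    have hmem : ∀ y, y ∈ X ↔ ∃ i < X.card, r i + (X.card - 1 - i) = y := by
      intro y
      conv_lhs => rw [himg]
      simp
    have hc : X.card < x := by
      have : X ⊆ Ioo 0 x := by
        intro y hy
        rw [mem_Ioo]
        exact ⟨Nat.pos_of_ne_zero (fun h => h00 (h ▸ hy)), hlt y hy⟩
      have := card_le_card this
      rw [Nat.card_Ioo] at this
      omega
    have hr0 : r 0 ≤ x - X.card := by
      have h1 := hpos 0
      by_cases h2 : 0 < X.card
      · have : r 0 + (X.card - 1 - 0) ∈ X := by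
          rw [hmem]
          exact ⟨0, h2, rfl⟩
        have := hlt _ this
        omega
      · omega
    refine ⟨fun i => if i = 0 then x - X.card else r (i - 1), ?_, ?_, ?_⟩
    · intro i j hij
      simp only
      split_ifs with h1 h2 h2
      · exact le_refl _
      · omega
      · exact (hr (Nat.zero_le _)).trans hr0
      · exact hr (by omega)
    · intro i
      rw [card_insert_of_notMem hx]
      simp only
      split_ifs with h1
      · omega
      · rw [hpos]; omega
    · rw [card_insert_of_notMem hx]
      ext y
      rw [mem_insert, mem_image]
      constructor
      · rintro (rfl | hy)
        · exact ⟨0, by simp, by simp; omega⟩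
        · rw [hmem] at hy
          obtain ⟨i, hi, rfl⟩ := hy
          exact ⟨i + 1, by rw [Finset.mem_range]; omega, by simp; omega⟩
      · rintro ⟨i, hi, rfl⟩
        rw [Finset.mem_range] at hi
        by_cases h1 : i = 0
        · left; simp [h1]; omega
        · right
          simp only [if_neg h1]
          rw [hmem]
          exact ⟨i - 1, by omega, by omega⟩

lemma bX_surj (X : Finset ℕ) (h0 : 0 ∉ X) : ∃ μ, bX μ = X := by
  obtain ⟨r, hr, hpos, himg⟩ := seq_of X h0
  have hmem : ∀ i j, (i, j) ∈ mkY r hr X.card ↔ j < r i := by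
    intro i j
    rw [← YoungDiagram.mem_cells]
    simp only [mkY, mem_filter, mem_product, Finset.mem_range]
    have := hpos i
    have := hr (Nat.zero_le i)
    omega
  have hrow : ∀ i, (mkY r hr X.card).rowLen i = r i := by
    intro i
    apply eq_of_forall_lt_iff
    intro j
    rw [← YoungDiagram.mem_iff_lt_rowLen, hmem]
  have hcol : (mkY r hr X.card).colLen 0 = X.card := by
    apply eq_of_forall_lt_iff
    intro j
    rw [← YoungDiagram.mem_iff_lt_colLen, hmem, hpos]
  refine ⟨mkY r hr X.card, ?_⟩
  rw [bX, hcol]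
  simp only [hrow]
  exact himg.symm

def XX (z : ℕ × ℕ) : Finset ℕ :=
  (range z.1).image (fun i => 3 * i + 1) ∪ (range z.2).image (fun i => 3 * i + 2)

lemma mem_XX1 (z : ℕ × ℕ) (i : ℕ) : 3 * i + 1 ∈ XX z ↔ i < z.1 := by
  simp only [XX, mem_union, mem_image, Finset.mem_range]
  constructor
  · rintro (⟨a, h, e⟩ | ⟨a, h, e⟩) <;> omega
  · intro h; exact Or.inl ⟨i, h, rfl⟩

lemma mem_XX2 (z : ℕ × ℕ) (i : ℕ) : 3 * i + 2 ∈ XX z ↔ i < z.2 := by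
  simp only [XX, mem_union, mem_image, Finset.mem_range]
  constructor
  · rintro (⟨a, h, e⟩ | ⟨a, h, e⟩) <;> omega
  · intro h; exact Or.inr ⟨i, h, rfl⟩

lemma mem_XX0 (z : ℕ × ℕ) (i : ℕ) : 3 * i ∉ XX z := by
  simp only [XX, mem_union, mem_image, Finset.mem_range]
  rintro (⟨a, h, e⟩ | ⟨a, h, e⟩) <;> omega

lemma XX_inj : Function.Injective XX := by
  rintro ⟨u, v⟩ ⟨u', v'⟩ h
  ext
  · apply eq_of_forall_lt_iff
    intro i
    rw [← mem_XX1, ← mem_XX1, h]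
  · apply eq_of_forall_lt_iff
    intro i
    rw [← mem_XX2, ← mem_XX2, h]

lemma XX_clo (z : ℕ × ℕ) : Clo (XX z) := by
  intro x hx h3
  obtain ⟨i, hi⟩ : ∃ i, x = 3 * i ∨ x = 3 * i + 1 ∨ x = 3 * i + 2 := ⟨x / 3, by omega⟩
  rcases hi with rfl | rfl | rfl
  · exact absurd hx (mem_XX0 z i)
  · rw [mem_XX1] at hx
    rw [show 3 * i + 1 - 3 = 3 * (i - 1) + 1 by omega, mem_XX1]; omega
  · rw [mem_XX2] at hx
    rw [show 3 * i + 2 - 3 = 3 * (i - 1) + 2 by omega, mem_XX2]; omega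

lemma down_range (X : Finset ℕ) (hX : Clo X) (c : ℕ) : ∃ u, ∀ i, 3 * i + c ∈ X ↔ i < u := by
  classical
  have hex : ∃ i, 3 * i + c ∉ X := by
    by_contra h
    push Not at h
    exact Set.infinite_of_injective_forall_mem (s := (X : Set ℕ)) (f := fun i => 3 * i + c)
      (fun a b h => by simp only at h; omega) (fun i => by simpa using h i) X.finite_toSet
  refine ⟨Nat.find hex, fun i => ⟨fun h => ?_, fun h => ?_⟩⟩
  · by_contra hc
    have h1 := Nat.find_spec hex
    apply h1
    have := Clo_iter hX (i - Nat.find hex) _ h (by omega)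
    rwa [show 3 * i + c - 3 * (i - Nat.find hex) = 3 * Nat.find hex + c by omega] at this
  · have := Nat.find_min hex h
    exact not_not.1 this

lemma XX_surj (X : Finset ℕ) (h0 : 0 ∉ X) (hX : Clo X) : ∃ z, XX z = X := by
  obtain ⟨u, hu⟩ := down_range X hX 1
  obtain ⟨v, hv⟩ := down_range X hX 2
  refine ⟨(u, v), ?_⟩
  ext x
  obtain ⟨i, hi⟩ : ∃ i, x = 3 * i ∨ x = 3 * i + 1 ∨ x = 3 * i + 2 := ⟨x / 3, by omega⟩
  rcases hi with rfl | rfl | rfl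
  · refine iff_of_false (mem_XX0 _ i) (fun h => h0 ?_)
    have := Clo_iter hX i _ h (le_refl _)
    simpa using this
  · rw [mem_XX1, hu]
  · rw [mem_XX2, hv]

lemma XX_disj (z : ℕ × ℕ) : Disjoint ((range z.1).image (fun i => 3 * i + 1))
    ((range z.2).image (fun i => 3 * i + 2)) := by
  rw [disjoint_left]
  intro a h1 h2
  simp only [mem_image, Finset.mem_range] at h1 h2
  omega

lemma XX_card (z : ℕ × ℕ) : (XX z).card = z.1 + z.2 := by
  rw [XX, card_union_of_disjoint (XX_disj z), card_image_of_injective, card_image_of_injective,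
    card_range, card_range]
  · intro a b h; simp only at h; omega
  · intro a b h; simp only at h; omega

lemma XX_sum (z : ℕ × ℕ) : 2 * ((∑ x ∈ XX z, x : ℕ) : ℤ) =
    3 * z.1 ^ 2 - z.1 + 3 * z.2 ^ 2 + z.2 := by
  have e1 : ∀ u : ℕ, 2 * ((∑ i ∈ range u, (3 * i + 1) : ℕ) : ℤ) = 3 * u ^ 2 - u := by
    intro u
    induction u with
    | zero => simp
    | succ u ih => rw [sum_range_succ]; push_cast at *; linarith
  have e2 : ∀ u : ℕ, 2 * ((∑ i ∈ range u, (3 * i + 2) : ℕ) : ℤ) = 3 * u ^ 2 + u := by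
    intro u
    induction u with
    | zero => simp
    | succ u ih => rw [sum_range_succ]; push_cast at *; linarith
  rw [XX, sum_union (XX_disj z), sum_image, sum_image, Nat.cast_add, mul_add, e1, e2]
  · ring
  · intro a _ b _ h; simp only at h; omega
  · intro a _ b _ h; simp only at h; omega

lemma card_of_XX (μ : YoungDiagram) (z : ℕ × ℕ) (h : bX μ = XX z) (n : ℕ) :
    μ.card = n ↔ z ∈ UV n := by
  have h1 := sum_bX μ
  rw [h] at h1
  have h2 := XX_sum z
  rw [XX_card] at h1
  have h3 : (((z.1 + z.2) * (z.1 + z.2 - 1) : ℕ) : ℤ) = (z.1 + z.2) * (z.1 + z.2 - 1) := by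
    rcases Nat.eq_zero_or_pos (z.1 + z.2) with h | h
    · rw [h]; have : (z.1 : ℤ) + z.2 = 0 := by exact_mod_cast h
      rw [this]; simp
    · push_cast [Nat.cast_sub (show 1 ≤ z.1 + z.2 from h)]; ring
  have h4 := congrArg (Nat.cast : ℕ → ℤ) h1
  rw [Nat.cast_add, h3, Nat.cast_mul, Nat.cast_mul, Nat.cast_ofNat, h2] at h4
  show _ ↔ z.1 ^ 2 + z.2 ^ 2 + z.2 = n + z.1 * z.2
  zify
  constructor
  · intro h; rw [h] at h4; linarith
  · intro h; linarith

lemma a3_set (n : ℕ) : ∃ G : ℕ × ℕ → YoungDiagram, Function.Injective G ∧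
    {μ : YoungDiagram | μ.card = n ∧ μ.IsThreeCore} = G '' UV n := by
  have hex : ∀ z : ℕ × ℕ, ∃ μ, bX μ = XX z := fun z =>
    bX_surj _ (by simpa using mem_XX0 z 0)
  choose G hG using hex
  have hinj : Function.Injective G := by
    intro z z' h
    apply XX_inj
    rw [← hG, ← hG, h]
  refine ⟨G, hinj, ?_⟩
  ext μ
  constructor
  · rintro ⟨h1, h2⟩
    rw [core_iff] at h2
    obtain ⟨z, hz⟩ := XX_surj _ (zero_bX μ) h2
    exact ⟨z, (card_of_XX μ z hz.symm n).1 h1, bX_inj (by rw [hG, hz])⟩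
  · rintro ⟨z, hz, rfl⟩
    refine ⟨(card_of_XX _ z (hG z) n).2 hz, ?_⟩
    rw [core_iff, hG]
    exact XX_clo z

lemma a3_UV (n : ℕ) : a3 n = (UV n).ncard := by
  obtain ⟨G, hinj, h⟩ := a3_set n
  rw [← Set.ncard_image_of_injective (UV n) hinj, ← h]
  rfl

lemma a3_RR (n : ℕ) : (a3 n : ℤ) = RR (3 * n + 1) := by
  rw [a3_UV, UV_RR]

lemma UV_finite (n : ℕ) : (UV n).Finite := by
  apply Set.Finite.subset ((Set.finite_Iic (2 * n)).prod (Set.finite_Iic (2 * n)))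
  rintro ⟨u, v⟩ h
  have h : u ^ 2 + v ^ 2 + v = n + u * v := h
  refine ⟨?_, ?_⟩
  · show u ≤ 2 * n
    zify at *
    nlinarith [sq_nonneg ((u : ℤ) - 2 * v), sq_nonneg ((u : ℤ) - 1), sq_nonneg ((v : ℤ))]
  · show v ≤ 2 * n
    zify at *
    nlinarith [sq_nonneg (2 * (u : ℤ) - v), sq_nonneg ((v : ℤ))]

lemma card_fiber {α β : Type*} (P : Set α) (Q : Set β) (f : α → ℕ) (g : β → ℕ) (n : ℕ)
    (hP : ∀ m, {a | f a = m ∧ a ∈ P}.Finite) (hQ : ∀ m, {b | g b = m ∧ b ∈ Q}.Finite) :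
    {p : α × β | f p.1 + g p.2 = n ∧ p.1 ∈ P ∧ p.2 ∈ Q}.Finite ∧
    {p : α × β | f p.1 + g p.2 = n ∧ p.1 ∈ P ∧ p.2 ∈ Q}.ncard =
      ∑ ij ∈ antidiagonal n, {a | f a = ij.1 ∧ a ∈ P}.ncard * {b | g b = ij.2 ∧ b ∈ Q}.ncard := by
  classical
  have e : {p : α × β | f p.1 + g p.2 = n ∧ p.1 ∈ P ∧ p.2 ∈ Q} =
      (((antidiagonal n).biUnion fun ij => (hP ij.1).toFinset ×ˢ (hQ ij.2).toFinset :
        Finset (α × β)) : Set (α × β)) := by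
    ext ⟨a, b⟩
    simp only [Set.mem_ofPred_eq, mem_coe, mem_biUnion, HasAntidiagonal.mem_antidiagonal, mem_product,
      Set.Finite.mem_toFinset]
    constructor
    · rintro ⟨h1, h2, h3⟩
      exact ⟨(f a, g b), h1, ⟨rfl, h2⟩, ⟨rfl, h3⟩⟩
    · rintro ⟨⟨i, j⟩, h1, ⟨h2, h3⟩, ⟨h4, h5⟩⟩
      simp only at *
      exact ⟨by omega, h3, h5⟩
  rw [e]
  refine ⟨Finset.finite_toSet _, ?_⟩
  rw [Set.ncard_coe_finset, card_biUnion]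
  · apply sum_congr rfl
    intro ij _
    rw [card_product, Set.ncard_eq_toFinset_card _ (hP ij.1), Set.ncard_eq_toFinset_card _ (hQ ij.2)]
  · rintro ⟨i, j⟩ _ ⟨i', j'⟩ _ hne
    rw [Function.onFun, disjoint_left]
    rintro ⟨a, b⟩ h1 h2
    simp only [mem_product, Set.Finite.mem_toFinset, Set.mem_ofPred_eq] at h1 h2
    apply hne
    rw [Prod.mk.injEq]; omega

def TC : Set YoungDiagram := {μ | μ.IsThreeCore}

lemma a3_eq (n : ℕ) : a3 n = {μ : YoungDiagram | μ.card = n ∧ μ ∈ TC}.ncard := rfl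

lemma a3_fin (n : ℕ) : {μ : YoungDiagram | μ.card = n ∧ μ ∈ TC}.Finite := by
  obtain ⟨G, _, h⟩ := a3_set n
  have : {μ : YoungDiagram | μ.card = n ∧ μ ∈ TC} = G '' UV n := h
  rw [this]
  exact (UV_finite n).image _

lemma B3_sum (n : ℕ) : B3 n = ∑ ij ∈ antidiagonal n, a3 ij.1 * ∑ kl ∈ antidiagonal ij.2,
    a3 kl.1 * a3 kl.2 := by
  have h1 := fun m => card_fiber TC TC YoungDiagram.card YoungDiagram.card m a3_fin a3_fin
  have h2 := card_fiber TC {p : YoungDiagram × YoungDiagram | p.1 ∈ TC ∧ p.2 ∈ TC}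
    YoungDiagram.card (fun p => p.1.card + p.2.card) n a3_fin (fun m => (h1 m).1)
  have e : B3 n = {p : YoungDiagram × YoungDiagram × YoungDiagram |
    p.1.card + (p.2.1.card + p.2.2.card) = n ∧ p.1 ∈ TC ∧ p.2 ∈
      {p : YoungDiagram × YoungDiagram | p.1 ∈ TC ∧ p.2 ∈ TC}}.ncard := by
    rw [B3]
    simp only [add_assoc]
    rfl
  rw [e, h2.2]
  apply sum_congr rfl
  intro ij _
  rw [a3_eq]
  congr 1
  exact (h1 ij.2).2

lemma reindex (H : ℕ → ℤ) (n c : ℕ) (hc : c < 3) :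
    ∑ ij ∈ antidiagonal (3 * n + 1 + c), (RR ij.1 * (if (ij.1 : ZMod 3) = 1 then 1 else 0)) * H ij.2
      = ∑ ij ∈ antidiagonal n, RR (3 * ij.1 + 1) * H (3 * ij.2 + c) := by
  symm
  apply sum_of_injOn (fun ij => (3 * ij.1 + 1, 3 * ij.2 + c))
  · rintro ⟨i, j⟩ _ ⟨i', j'⟩ _ h
    simp only [Prod.mk.injEq] at *
    omega
  · rintro ⟨i, j⟩ h
    simp only [mem_coe, HasAntidiagonal.mem_antidiagonal] at *
    omega
  · rintro ⟨i, j⟩ h h2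
    simp only [HasAntidiagonal.mem_antidiagonal] at h
    simp only
    rw [if_neg, mul_zero, zero_mul]
    intro h1
    apply h2
    obtain ⟨d, hd⟩ := cast_cases i
    rcases hd with ⟨_, h3⟩ | ⟨h4, _⟩ | ⟨_, h3⟩
    · rw [h3] at h1; exact absurd h1 (by decide)
    · refine ⟨(d, n - d), ?_, ?_⟩
      · simp only [mem_coe, HasAntidiagonal.mem_antidiagonal]; omega
      · simp only [Prod.mk.injEq]; omega
    · rw [h3] at h1; exact absurd h1 (by decide)
  · rintro ⟨i, j⟩ h
    have : ((3 * i + 1 : ℕ) : ZMod 3) = 1 := by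
      push_cast
      rw [show (3 : ZMod 3) = 0 from rfl]; simp
    simp only
    rw [if_pos this, mul_one]

lemma B3_ff (n : ℕ) : (B3 n : ℤ) = ff (n + 1) := by
  rw [← triple (n + 1) (by omega), show 3 * (n + 1) = 3 * n + 1 + 2 by ring,
    reindex (fun N => ∑ kl ∈ antidiagonal N, (RR kl.1 * (if (kl.1 : ZMod 3) = 1 then 1 else 0)) *
      (RR kl.2 * (if (kl.2 : ZMod 3) = 1 then 1 else 0))) n 2 (by norm_num), B3_sum]
  push_cast
  apply sum_congr rfl
  intro ij _
  rw [a3_RR]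
  congr 1
  rw [show 3 * ij.2 + 2 = 3 * ij.2 + 1 + 1 by ring,
    reindex (fun N => RR N * (if (N : ZMod 3) = 1 then 1 else 0)) ij.2 1 (by norm_num)]
  apply sum_congr rfl
  intro kl _
  rw [a3_RR, a3_RR]
  have : ((3 * kl.2 + 1 : ℕ) : ZMod 3) = 1 := by
    push_cast
    rw [show (3 : ZMod 3) = 0 from rfl]; simp
  rw [if_pos this, mul_one]

lemma ff_iter (p : ℕ) (hp : p.Prime) (hp3 : p % 3 = 2) (K : ℕ) (hK : 0 < K) (k : ℕ) :
    ((p : ℤ) ^ 2 + 1) * ff (p ^ k * K) = ((p : ℤ) ^ (2 * k) - (-1) ^ k) * ff (p * K) +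
      ((p : ℤ) ^ (2 * k) + (-1) ^ k * (p : ℤ) ^ 2) * ff K := by
  induction k using Nat.twoStepInduction with
  | zero => simp only [pow_zero, mul_zero, one_mul]; ring
  | one => simp only [pow_one, mul_one]; ring
  | more k h1 h2 =>
    have h3 := ff_rec p hp hp3 (p ^ k * K) (by have := hp.pos; positivity)
    rw [show p ^ (k + 2) * K = p * (p * (p ^ k * K)) by ring, h3]
    rw [show p ^ (k + 1) * K = p * (p ^ k * K) by ring] at h2
    have e1 : (p : ℤ) ^ (2 * (k + 1)) = (p : ℤ) ^ 2 * (p : ℤ) ^ (2 * k) := by ring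
    have e2 : (p : ℤ) ^ (2 * (k + 2)) = (p : ℤ) ^ 4 * (p : ℤ) ^ (2 * k) := by ring
    have e3 : (-1 : ℤ) ^ (k + 1) = - (-1) ^ k := by ring
    have e4 : (-1 : ℤ) ^ (k + 2) = (-1) ^ k := by ring
    rw [e1, e3] at h2
    rw [e2, e4]
    linear_combination ((p : ℤ) ^ 2 - 1) * h2 + (p : ℤ) ^ 2 * h1

/-- For a prime p ≡ 2 (mod 3) and k, n ≥ 0:
(p²+1)·B₃(pᵏn + pᵏ − 1) = (p²ᵏ−(−1)ᵏ)·B₃(pn + p − 1) + (p²ᵏ+(−1)ᵏp²)·B₃(n). -/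
theorem B3_rec_two_mod_three (p k n : ℕ) (hp : p.Prime) (hp3 : p % 3 = 2) :
    ((p : ℤ) ^ 2 + 1) * B3 (p ^ k * n + p ^ k - 1) =
      ((p : ℤ) ^ (2 * k) - (-1) ^ k) * B3 (p * n + p - 1) +
      ((p : ℤ) ^ (2 * k) + (-1) ^ k * (p : ℤ) ^ 2) * B3 n := by
  have hp0 := hp.pos
  have h1 : p ^ k * n + p ^ k - 1 + 1 = p ^ k * (n + 1) := by
    have : 0 < p ^ k := by positivity
    rw [Nat.sub_add_cancel (by omega)]; ring
  have h2 : p * n + p - 1 + 1 = p * (n + 1) := by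
    rw [Nat.sub_add_cancel (by omega)]; ring
  rw [B3_ff, B3_ff, B3_ff, h1, h2]
  exact ff_iter p hp hp3 (n + 1) (by omega) k
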